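/- If G is a 5-connected nonplanar apex graph with apex vertex v, and G does not contain K₄⁻ as a subgraph, then the planar graph G − v has minimum degree exactly 4. -/

import Mathlib

open SimpleGraph

variable {V : Type*}

/-- `K₄⁻` (two triangles sharing the edge `ab`; the edge `cd` may be absent)
occurs as a subgraph of `G`. -/
def containsK4minus (G : SimpleGraph V) : Prop :=
  ∃ a b c d : V, a ≠ b ∧ a ≠ c ∧ a ≠ d ∧ b ≠ c ∧ b ≠ d ∧ c ≠ d ∧
    G.Adj a b ∧ G.Adj a c ∧ G.Adj a d ∧ G.Adj b c ∧ G.Adj b d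

/-- `G` contains a subdivision of `K₅`: five branch vertices joined by
pairwise internally disjoint paths. -/
def containsK5Subdivision (G : SimpleGraph V) : Prop :=
  ∃ (b : Fin 5 → V) (P : ∀ i j : Fin 5, G.Walk (b i) (b j)),
    Function.Injective b ∧
    (∀ i j, i ≠ j → (P i j).IsPath) ∧
    (∀ i j, i ≠ j → ∀ k, b k ∈ (P i j).support → k = i ∨ k = j) ∧
    (∀ i j i' j', i < j → i' < j' → (i, j) ≠ (i', j') →
      ∀ x, x ∈ (P i j).support → x ∈ (P i' j').support → x = b i ∨ x = b j)

/-- `G` has an `H`-minor (branch sets are connected, disjoint, joined by edges). -/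
def HasMinor {W : Type*} (G : SimpleGraph V) (H : SimpleGraph W) : Prop :=
  ∃ f : W → Set V,
    (∀ w, (G.induce (f w)).Connected) ∧
    (∀ w₁ w₂, w₁ ≠ w₂ → Disjoint (f w₁) (f w₂)) ∧
    (∀ w₁ w₂, H.Adj w₁ w₂ → ∃ x ∈ f w₁, ∃ y ∈ f w₂, G.Adj x y)

/-- Planarity, via Wagner's theorem: no `K₅` and no `K₃,₃` minor. -/
def IsPlanar (G : SimpleGraph V) : Prop :=
  ¬ HasMinor G (completeGraph (Fin 5)) ∧
  ¬ HasMinor G (completeBipartiteGraph (Fin 3) (Fin 3))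

/-- `G` is `k`-connected: more than `k` vertices, and removing fewer than `k`
vertices leaves a connected graph. -/
def IsKConnected (k : ℕ) (G : SimpleGraph V) : Prop :=
  k < (Set.univ : Set V).ncard ∧
  ∀ S : Set V, S.Finite → S.ncard < k → (G.induce Sᶜ).Connected

/-- Boundary of a subgraph `H` of `G`: vertices of `H` incident with an edge
of `G` not in `H`. -/
def bnd (G : SimpleGraph V) (H : G.Subgraph) : Set V :=
  {v | v ∈ H.verts ∧ ∃ w, G.Adj v w ∧ ¬ H.Adj v w}

/-- A `k`-hammock: connected subgraph with boundary of size `k`. -/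
def IsHammock (G : SimpleGraph V) (k : ℕ) (H : G.Subgraph) : Prop :=
  H.Connected ∧ (bnd G H).ncard = k

def TrivialHammock (G : SimpleGraph V) (H : G.Subgraph) : Prop :=
  H.verts = bnd G H

def DegenerateHammock (G : SimpleGraph V) (H : G.Subgraph) : Prop :=
  H.verts.ncard = (bnd G H).ncard + 1

def FatHammock (G : SimpleGraph V) (H : G.Subgraph) : Prop :=
  (bnd G H).ncard + 2 ≤ H.verts.ncard

/-- A `4`-hammock is minimal if all its proper `4`-hammocks are trivial or degenerate. -/
def Minimal4Hammock (G : SimpleGraph V) (H : G.Subgraph) : Prop :=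
  IsHammock G 4 H ∧
  ∀ H' : G.Subgraph, H' ≤ H → H' ≠ H → IsHammock G 4 H' →
    TrivialHammock G H' ∨ DegenerateHammock G H'

def MinimalFat4Hammock (G : SimpleGraph V) (H : G.Subgraph) : Prop :=
  Minimal4Hammock G H ∧ FatHammock G H

/-- The list `l` records a cycle of `G` (vertices in clockwise order). -/
def IsCycleList (G : SimpleGraph V) (l : List V) : Prop :=
  l.Nodup ∧ 3 ≤ l.length ∧
    ∀ i : Fin l.length,
      G.Adj (l.get i) (l.get ⟨((i : ℕ) + 1) % l.length, Nat.mod_lt _ i.pos⟩)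

/-- `x` and `y` are consecutive on the cyclic list `C`. -/
def CycAdj (C : List V) (x y : V) : Prop :=
  ∃ i : Fin C.length,
    (C.get i = x ∧ C.get ⟨((i : ℕ) + 1) % C.length, Nat.mod_lt _ i.pos⟩ = y) ∨
    (C.get i = y ∧ C.get ⟨((i : ℕ) + 1) % C.length, Nat.mod_lt _ i.pos⟩ = x)

/-- Clockwise (forward) distance between positions on a cycle of length `n`. -/
def cycDist (n i j : ℕ) : ℕ := (j + n - i) % n

/-- The open segment of the cycle `C` from `a` clockwise to `b`. -/
def segOpen (C : List V) (a b : V) : Set V :=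
  {x | ∃ i j k : Fin C.length, C.get i = a ∧ C.get j = b ∧ C.get k = x ∧
    k ≠ i ∧ k ≠ j ∧ cycDist C.length (i : ℕ) (k : ℕ) < cycDist C.length (i : ℕ) (j : ℕ)}

/-- The closed segment of the cycle `C` from `a` clockwise to `b`. -/
def segClosed (C : List V) (a b : V) : Set V := segOpen C a b ∪ {a, b}

/-- `a 0, a 1, a 2, a 3` appear in this clockwise order along the cycle `C`. -/
def ClockwiseOn (C : List V) (a : Fin 4 → V) : Prop :=
  ∃ p : Fin 4 → Fin C.length, (∀ j, C.get (p j) = a j) ∧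
    ∀ j k : Fin 4, j < k →
      cycDist C.length ((p 0 : Fin C.length) : ℕ) ((p j : Fin C.length) : ℕ) <
        cycDist C.length ((p 0 : Fin C.length) : ℕ) ((p k : Fin C.length) : ℕ)

/-- `x` and `y` are consecutive among the points of `S` on the cycle `C`:
one of the two open arcs between them misses `S`. -/
def ConsecutiveOn (C : List V) (S : Set V) (x y : V) : Prop :=
  segOpen C x y ∩ S = ∅ ∨ segOpen C y x ∩ S = ∅

/-- A combinatorial plane graph: a graph together with its facial cycles and a
distinguished outer face; every edge lies on exactly two faces and every vertex
on exactly `deg` faces (valid for `2`-connected plane graphs). -/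
structure PlaneGraph (V : Type*) where
  graph : SimpleGraph V
  faces : Finset (List V)
  outer : List V
  outer_mem : outer ∈ faces
  faces_cycle : ∀ f ∈ faces, IsCycleList graph f
  edge_two_faces : ∀ x y, graph.Adj x y →
    {f ∈ (faces : Set (List V)) | CycAdj f x y}.ncard = 2
  vertex_faces : ∀ v : V,
    {f ∈ (faces : Set (List V)) | v ∈ f}.ncard = (graph.neighborSet v).ncard

def Cofacial (P : PlaneGraph V) (u w : V) : Prop :=
  ∃ f ∈ P.faces, u ∈ f ∧ w ∈ f

/-- `C` is the rim of the facial wheel `S_u`: the induced cycle on the vertices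
cofacial with `u`, containing `N(u)` and separating `u` from the rest of the graph. -/
def IsFacialRim (P : PlaneGraph V) (u : V) (C : List V) : Prop :=
  IsCycleList P.graph C ∧ u ∉ C ∧
  (∀ w, w ∈ C ↔ (w ≠ u ∧ Cofacial P u w)) ∧
  P.graph.neighborSet u ⊆ {x | x ∈ C} ∧
  (∀ x ∈ C, ∀ y ∈ C, P.graph.Adj x y → CycAdj C x y) ∧
  (∀ w, w ∉ C → w ≠ u → ∀ p : P.graph.Walk u w, ∃ x ∈ p.support, x ∈ C)

/-- The facial wheel `S_u` (hub `u`, spokes, and rim `C`) is a subgraph of `H`. -/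
def WheelIn (G : SimpleGraph V) (H : G.Subgraph) (u : V) (C : List V) : Prop :=
  u ∈ H.verts ∧ (∀ x ∈ C, x ∈ H.verts) ∧
  (∀ x, G.Adj u x → H.Adj u x) ∧
  (∀ x y, CycAdj C x y → H.Adj x y)

/-- A system of `k` pairwise vertex-disjoint `(A,B)`-paths inside the subgraph `H`,
internally disjoint from `A ∪ B`. -/
structure Linkage (G : SimpleGraph V) (H : G.Subgraph) (A B : Set V) (k : ℕ) where
  s : Fin k → V
  t : Fin k → V
  walk : ∀ i, G.Walk (s i) (t i)
  isPath : ∀ i, (walk i).IsPath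
  support_mem : ∀ i, ∀ x ∈ (walk i).support, x ∈ H.verts
  edges_mem : ∀ i, ∀ e ∈ (walk i).edges, e ∈ H.edgeSet
  s_mem : ∀ i, s i ∈ A
  t_mem : ∀ i, t i ∈ B
  internal : ∀ i, ∀ x ∈ (walk i).support, x ≠ s i → x ≠ t i → x ∉ A ∧ x ∉ B
  disj : ∀ i j, i ≠ j → ∀ x ∈ (walk i).support, x ∉ (walk j).support

/-- A `C_u`-linkage: a `(bnd H, C)`-4-linkage in `H`. -/
abbrev CuLinkage (G : SimpleGraph V) (H : G.Subgraph) (C : List V) :=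
  Linkage G H (bnd G H) {x | x ∈ C} 4

/-- `α(L)`: the number of endpoints of the linkage lying in `N(u)`. -/
noncomputable def lAlpha (G : SimpleGraph V) (u : V) {H : G.Subgraph} {A B : Set V} {k : ℕ}
    (L : Linkage G H A B k) : ℕ :=
  {i : Fin k | L.t i ∈ G.neighborSet u}.ncard

/-- Data of a short wheel: the four neighbours of `u` in clockwise rim order,
two edge-disjoint triangles at `u`, and the two remaining rim segments of
order between 2 and 4, not both of order 4. -/
def ShortWheelOn (G : SimpleGraph V) (u : V) (C : List V) (n : Fin 4 → V) : Prop :=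
  ClockwiseOn C n ∧ Set.range n = G.neighborSet u ∧
  G.Adj (n 0) (n 1) ∧ G.Adj (n 2) (n 3) ∧
  (segOpen C (n 1) (n 2)).ncard ≤ 2 ∧ (segOpen C (n 3) (n 0)).ncard ≤ 2 ∧
  ¬((segOpen C (n 1) (n 2)).ncard = 2 ∧ (segOpen C (n 3) (n 0)).ncard = 2)

def IsShortWheel (G : SimpleGraph V) (u : V) (C : List V) : Prop :=
  (G.neighborSet u).ncard = 4 ∧ ∃ n, ShortWheelOn G u C n

/-- A short wheel which, if imbalanced (a segment of order 4), is proper with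
respect to the boundary set `B`: the interior of that segment avoids `B`. -/
def IsShortProperWheel (G : SimpleGraph V) (u : V) (C : List V) (B : Set V) : Prop :=
  (G.neighborSet u).ncard = 4 ∧ ∃ n, ShortWheelOn G u C n ∧
    ((segOpen C (n 1) (n 2)).ncard = 2 → segOpen C (n 1) (n 2) ∩ B = ∅) ∧
    ((segOpen C (n 3) (n 0)).ncard = 2 → segOpen C (n 3) (n 0) ∩ B = ∅)

/-!
Let `H = G - v`, a planar `4`-connected graph on `n` vertices with `m` edges and `p` peripheral
(induced nonseparating) cycles, the combinatorial substitute for the faces. By Tutte's theorem, an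
edge labelling in `ZMod 2` that sums to zero over every peripheral cycle is a coboundary, so
`m ≤ p + n`. Planarity forbids three peripheral cycles through one edge, since they would yield a
`K₅` or `K₃,₃` minor. As `K₄⁻` does not occur, every edge lies in at most one triangle, so at most
`m / 3` peripheral cycles are triangles, and counting edges on cycles gives `4 p ≤ 2 m + m / 3`.
Were all degrees at least `5`, then `5 n ≤ 2 m`, and
`m ≤ p + n ≤ (7 / 12) m + (2 / 5) m < m`, a contradiction.
-/

/-! ### Connected vertex sets and components -/

section Connectivity

variable {G : SimpleGraph V} {A B D D' Q R S T X : Set V} {x y : V} {k l : ℕ}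

theorem connected_induce_singleton (x : V) : (G.induce {x}).Connected := by
  rw [induce_singleton_eq_top]
  exact connected_top

theorem connected_induce_insert (hS : (G.induce S).Connected) (hx : x ∈ S) (h : G.Adj x y) :
    (G.induce (insert y S)).Connected :=
  connected_induce_union (connected_induce_singleton y).preconnected hS.preconnected
    (Set.mem_singleton y) hx h.symm

theorem nonempty_of_connected_induce (hS : (G.induce S).Connected) : S.Nonempty :=
  Set.nonempty_coe_sort.mp hS.nonempty

theorem exists_adj_of_mem_of_notMem (hS : (G.induce S).Connected) (hxS : x ∈ S) (hxT : x ∈ T)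
    (hyS : y ∈ S) (hyT : y ∉ T) : ∃ a ∈ S ∩ T, ∃ b ∈ S \ T, G.Adj a b := by
  obtain ⟨p⟩ := hS.preconnected ⟨x, hxS⟩ ⟨y, hyS⟩
  obtain ⟨d, -, hd₁, hd₂⟩ := p.exists_boundary_dart (Subtype.val ⁻¹' T) hxT hyT
  exact ⟨d.fst, ⟨d.fst.2, hd₁⟩, d.snd, ⟨d.snd.2, hd₂⟩, d.adj⟩

/-- Two sets of vertices touch if some edge joins the first to the second. -/
def Touch (G : SimpleGraph V) (A B : Set V) : Prop :=
  ∃ a ∈ A, ∃ b ∈ B, G.Adj a b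

theorem Touch.symm (h : Touch G A B) : Touch G B A :=
  let ⟨a, ha, b, hb, hab⟩ := h
  ⟨b, hb, a, ha, hab.symm⟩

theorem Touch.mono {A' B' : Set V} (h : Touch G A B) (hA : A ⊆ A') (hB : B ⊆ B') :
    Touch G A' B' :=
  let ⟨a, ha, b, hb, hab⟩ := h
  ⟨a, hA ha, b, hB hb, hab⟩

theorem Touch.connected_union (h : Touch G A B) (hA : (G.induce A).Connected)
    (hB : (G.induce B).Connected) : (G.induce (A ∪ B)).Connected :=
  let ⟨_, ha, _, hb, hab⟩ := h
  connected_induce_union hA.preconnected hB.preconnected ha hb hab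

/-- `D` is the vertex set of a connected component of the subgraph induced on `R`. -/
structure IsComponentIn (G : SimpleGraph V) (R D : Set V) : Prop where
  subset : D ⊆ R
  connected : (G.induce D).Connected
  mem_of_adj : ∀ ⦃a b⦄, a ∈ D → b ∈ R → G.Adj a b → b ∈ D

theorem exists_isComponentIn (hS : (G.induce S).Connected) (hSR : S ⊆ R) :
    ∃ D, IsComponentIn G R D ∧ S ⊆ D := by
  set F : Set (Set V) := {T | S ⊆ T ∧ T ⊆ R ∧ (G.induce T).Connected}
  have hSF : S ∈ F := ⟨subset_rfl, hSR, hS⟩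
  obtain ⟨x, hx⟩ := nonempty_of_connected_induce hS
  refine ⟨⋃₀ F, ⟨Set.sUnion_subset fun T hT => hT.2.1, ?_, ?_⟩, Set.subset_sUnion_of_mem hSF⟩
  · exact induce_sUnion_connected_of_pairwise_not_disjoint ⟨S, hSF⟩
      (fun hT hT' => ⟨x, hT.1 hx, hT'.1 hx⟩) fun hT => hT.2.2
  · rintro a b ⟨T, hT, haT⟩ hb hab
    exact ⟨insert b T, ⟨hT.1.trans (Set.subset_insert b T), Set.insert_subset hb hT.2.1,
      connected_induce_insert hT.2.2 haT hab⟩, Set.mem_insert b T⟩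

theorem exists_isComponentIn_of_mem (hx : x ∈ R) : ∃ D, IsComponentIn G R D ∧ x ∈ D := by
  obtain ⟨D, hD, hxD⟩ :=
    exists_isComponentIn (connected_induce_singleton (G := G) x) (Set.singleton_subset_iff.2 hx)
  exact ⟨D, hD, hxD rfl⟩

namespace IsComponentIn

theorem nonempty (hD : IsComponentIn G R D) : D.Nonempty :=
  nonempty_of_connected_induce hD.connected

theorem subset_of_mem (hD : IsComponentIn G R D) (hS : (G.induce S).Connected) (hSR : S ⊆ R)
    (hxD : x ∈ D) (hxS : x ∈ S) : S ⊆ D := by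
  by_contra h
  obtain ⟨y, hyS, hyD⟩ := Set.not_subset.1 h
  obtain ⟨a, ha, b, hb, hab⟩ := exists_adj_of_mem_of_notMem hS hxS hxD hyS hyD
  exact hb.2 (hD.mem_of_adj ha.2 (hSR hb.1) hab)

theorem eq_of_mem (hD : IsComponentIn G R D) (hD' : IsComponentIn G R D') (hx : x ∈ D)
    (hx' : x ∈ D') : D = D' :=
  (hD'.subset_of_mem hD.connected hD.subset hx' hx).antisymm
    (hD.subset_of_mem hD'.connected hD'.subset hx hx')

theorem touch (hD : IsComponentIn G (X \ Q) D) (hX : (G.induce X).Connected)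
    (hQ : (X ∩ Q).Nonempty) : Touch G D Q := by
  obtain ⟨x, hx⟩ := hD.nonempty
  obtain ⟨q, hqX, hqQ⟩ := hQ
  obtain ⟨a, ha, b, hb, hab⟩ := exists_adj_of_mem_of_notMem hX (hD.subset hx).1 hx hqX
    fun h => (hD.subset h).2 hqQ
  exact ⟨a, ha.2, b, by_contra fun h => hb.2 (hD.mem_of_adj ha.2 ⟨hb.1, h⟩ hab), hab⟩

end IsComponentIn

theorem touch_or_exists_isComponentIn (hX : (G.induce X).Connected) (hAX : A ⊆ X) (hBX : B ⊆ X)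
    (hA : A.Nonempty) (hB : B.Nonempty) (hAB : Disjoint A B) :
    Touch G A B ∨ ∃ D, IsComponentIn G (X \ (A ∪ B)) D ∧ Touch G D A ∧ Touch G D B := by
  obtain ⟨x, hx⟩ := hA
  obtain ⟨y, hy⟩ := hB
  set T : Set V := A ∪ {z | ∃ D, IsComponentIn G (X \ (A ∪ B)) D ∧ Touch G D A ∧ z ∈ D}
  have hyT : y ∉ T := by
    rintro (h | ⟨D, hD, -, h⟩)
    · exact hAB.notMem_of_mem_left h hy
    · exact (hD.subset h).2 (.inr hy)
  obtain ⟨a, ⟨-, haT⟩, b, ⟨hbX, hbT⟩, hab⟩ :=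
    exists_adj_of_mem_of_notMem hX (hAX hx) (.inl hx) (hBX hy) hyT
  have hbA : b ∉ A := fun h => hbT (.inl h)
  by_cases hbB : b ∈ B
  · obtain ha | ⟨D, hD, hDA, ha⟩ := haT
    · exact .inl ⟨a, ha, b, hbB, hab⟩
    · exact .inr ⟨D, hD, hDA, a, ha, b, hbB, hab⟩
  · have hbR : b ∈ X \ (A ∪ B) := ⟨hbX, by simp [hbA, hbB]⟩
    obtain ha | ⟨D, hD, hDA, ha⟩ := haT
    · obtain ⟨D, hD, hbD⟩ := exists_isComponentIn_of_mem (G := G) hbR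
      exact absurd (.inr ⟨D, hD, ⟨b, hbD, a, ha, hab.symm⟩, hbD⟩) hbT
    · exact absurd (.inr ⟨D, hD, hDA, hD.mem_of_adj ha hbR hab⟩) hbT

/-- The vertices outside `B` that are adjacent to a vertex of `B`. -/
def outerBoundary (G : SimpleGraph V) (B : Set V) : Set V :=
  {x | x ∉ B ∧ ∃ b ∈ B, G.Adj b x}

namespace IsKConnected

protected theorem finite (h : IsKConnected k G) : Finite V :=
  Set.finite_univ_iff.1 (Set.finite_of_ncard_pos (Nat.zero_lt_of_lt h.1))

protected theorem mono (h : IsKConnected l G) (hkl : k ≤ l) : IsKConnected k G :=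
  ⟨hkl.trans_lt h.1, fun S hS hSk => h.2 S hS (hSk.trans_le hkl)⟩

theorem induce_compl_singleton (h : IsKConnected (k + 1) G) (v : V) :
    IsKConnected k (G.induce ({v}ᶜ : Set V)) := by
  have := h.finite
  constructor
  · have hv : (Set.univ : Set ↥({v}ᶜ : Set V)).ncard + 1 = (Set.univ : Set V).ncard := by
      rw [Set.ncard_univ, Nat.card_coe_set_eq, ← Set.ncard_singleton v, add_comm,
        Set.ncard_add_ncard_compl, Set.ncard_univ]
    have := h.1
    omega
  · intro S _ hSk
    set T : Set V := insert v (Subtype.val '' S)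
    have hT : T.ncard < k + 1 :=
      (Set.ncard_insert_le _ _).trans_lt <| by
        rw [Set.ncard_image_of_injective S Subtype.val_injective]
        omega
    let f : G.induce Tᶜ →g (G.induce ({v}ᶜ : Set V)).induce Sᶜ :=
      { toFun x := ⟨⟨x, fun hx => x.2 (.inl hx)⟩, fun hx => x.2 (.inr ⟨_, hx, rfl⟩)⟩
        map_rel' := id }
    refine (h.2 T T.toFinite hT).map f fun ⟨⟨x, hxv⟩, hxS⟩ => ⟨⟨x, ?_⟩, rfl⟩
    rintro (hx | ⟨z, hz, rfl⟩)
    exacts [hxv hx, hxS hz]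

theorem le_ncard_outerBoundary (h : IsKConnected k G) (hB : B.Nonempty) (hxB : x ∉ B)
    (hx : x ∉ outerBoundary G B) : k ≤ (outerBoundary G B).ncard := by
  have := h.finite
  by_contra! hk
  obtain ⟨b, hb⟩ := hB
  obtain ⟨c, hc, d, hd, hcd⟩ := exists_adj_of_mem_of_notMem
    (h.2 _ (outerBoundary G B).toFinite hk) (fun hb' => hb'.1 hb) hb hx hxB
  exact hd.1 ⟨hd.2, c, hc.2, hcd⟩

theorem le_ncard_neighborSet (h : IsKConnected k G) (u : V) : k ≤ (G.neighborSet u).ncard := by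
  have := h.finite
  have hu : outerBoundary G {u} = G.neighborSet u :=
    Set.ext fun x => ⟨fun ⟨_, _, hb, hx⟩ => hb ▸ hx, fun hx => ⟨hx.ne', u, rfl, hx⟩⟩
  by_cases hx : ∃ x, x ∉ insert u (G.neighborSet u)
  · obtain ⟨x, hx⟩ := hx
    rw [Set.mem_insert_iff, not_or, ← hu] at hx
    exact hu ▸ h.le_ncard_outerBoundary (Set.singleton_nonempty u) hx.1 hx.2
  · push Not at hx
    have := h.1
    rw [← Set.eq_univ_of_forall hx] at this
    exact Nat.le_of_lt_succ (this.trans_le (Set.ncard_insert_le _ _))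

theorem connected_compl (h : IsKConnected k G) (hS : S.ncard < k) : (G.induce Sᶜ).Connected :=
  have := h.finite
  h.2 S S.toFinite hS

end IsKConnected

end Connectivity

/-! ### Small minors from connected sets -/

section Minors

variable {G : SimpleGraph V} {p q : V}

/-- `A` links `p` and `q`: it is a connected set containing neither of them and adjacent to both,
like the interior of a path from `p` to `q`. -/
structure Links (G : SimpleGraph V) (p q : V) (A : Set V) : Prop where
  connected : (G.induce A).Connected
  left_notMem : p ∉ A
  right_notMem : q ∉ A
  touch_left : Touch G {p} A
  touch_right : Touch G {q} A

theorem Links.symm {A : Set V} (h : Links G p q A) : Links G q p A :=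
  ⟨h.connected, h.right_notMem, h.left_notMem, h.touch_right, h.touch_left⟩

theorem Links.subset_compl_pair {A : Set V} (h : Links G p q A) : A ⊆ ({p, q} : Set V)ᶜ := by
  rintro x hx (rfl | rfl)
  exacts [h.left_notMem hx, h.right_notMem hx]

theorem hasMinor_completeBipartiteGraph {ι κ : Type*} {X : ι → Set V} {Y : κ → Set V}
    (hX : ∀ i, (G.induce (X i)).Connected) (hY : ∀ j, (G.induce (Y j)).Connected)
    (hXX : Pairwise fun i i' => Disjoint (X i) (X i'))
    (hYY : Pairwise fun j j' => Disjoint (Y j) (Y j'))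
    (hXY : ∀ i j, Disjoint (X i) (Y j)) (h : ∀ i j, Touch G (X i) (Y j)) :
    HasMinor G (completeBipartiteGraph ι κ) := by
  refine ⟨Sum.elim X Y, ?_, ?_, ?_⟩
  · rintro (i | j)
    exacts [hX i, hY j]
  · rintro (i | j) (i' | j') hne
    exacts [hXX (fun h => hne (congrArg _ h)), hXY i j', (hXY i' j).symm,
      hYY (fun h => hne (congrArg _ h))]
  · rintro (i | j) (i' | j') hadj
    · simp at hadj
    · exact h i j'
    · exact (h i' j).symm
    · simp at hadj

theorem hasMinor_completeBipartiteGraph_of_links {A : Fin 3 → Set V} {D : Set V} (hpq : p ≠ q)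
    (hA : ∀ i, Links G p q (A i)) (hAA : Pairwise fun i j => Disjoint (A i) (A j))
    (hD : (G.induce D).Connected) (hpD : p ∉ D) (hqD : q ∉ D) (hDA : ∀ i, Disjoint D (A i))
    (h : ∀ i, Touch G D (A i)) : HasMinor G (completeBipartiteGraph (Fin 3) (Fin 3)) := by
  have hp i := (hA i).left_notMem
  have hq i := (hA i).right_notMem
  refine hasMinor_completeBipartiteGraph (X := ![{p}, {q}, D]) (Y := A) ?_
    (fun i => (hA i).connected) ?_ hAA ?_ ?_
  · simp only [Fin.forall_fin_succ, Matrix.cons_val_zero, IsEmpty.forall_iff, and_true]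
    exact ⟨connected_induce_singleton p, connected_induce_singleton q, hD⟩
  · intro i j hij
    fin_cases i <;> fin_cases j <;> simp_all [eq_comm]
  · intro i j
    fin_cases i <;> simp_all
  · intro i j
    fin_cases i
    exacts [(hA j).touch_left, (hA j).touch_right, h j]

theorem hasMinor_completeGraph_of_links {A : Fin 3 → Set V} (hpq : G.Adj p q)
    (hA : ∀ i, Links G p q (A i)) (hAA : Pairwise fun i j => Disjoint (A i) (A j))
    (h : Pairwise fun i j => Touch G (A i) (A j)) : HasMinor G (completeGraph (Fin 5)) := by
  have hp i : Disjoint {p} (A i) := Set.disjoint_singleton_left.2 (hA i).left_notMem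
  have hq i : Disjoint {q} (A i) := Set.disjoint_singleton_left.2 (hA i).right_notMem
  have hpq' : Disjoint ({p} : Set V) {q} := Set.disjoint_singleton.2 hpq.ne
  have htouch : Touch G {p} {q} := ⟨p, rfl, q, rfl, hpq⟩
  let X : Fin 5 → Set V := Fin.cons {p} (Fin.cons {q} A)
  have hdisj : Pairwise fun i j => Disjoint (X i) (X j) :=
    pairwise_fin_succ_iff.2 ⟨Fin.cases hpq'.symm fun i => (hp i).symm, Fin.cases hpq' hp,
      pairwise_fin_succ_iff.2 ⟨fun i => (hq i).symm, hq, hAA⟩⟩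
  have hadj : Pairwise fun i j => Touch G (X i) (X j) :=
    pairwise_fin_succ_iff.2 ⟨Fin.cases htouch.symm fun i => (hA i).touch_left.symm,
      Fin.cases htouch fun i => (hA i).touch_left,
      pairwise_fin_succ_iff.2 ⟨fun i => (hA i).touch_right.symm, fun i => (hA i).touch_right, h⟩⟩
  exact ⟨X, Fin.cases (connected_induce_singleton p) (Fin.cases (connected_induce_singleton q)
    fun i => (hA i).connected), fun _ _ hij => hdisj hij, fun _ _ hij => hadj hij⟩

end Minors

/-! ### Induced cycles -/

section InducedCycles

variable {W : Type*} {G : SimpleGraph V} {H : SimpleGraph W} {A B M S T : Set V}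
  {a b p q x y : V} {c : ℕ → V} {n i j k m : ℕ}

/-- `c` runs periodically around an induced cycle of length `n`. Indexing by `ℕ` rather than by
`ZMod n` makes the notion invariant under shifts and leaves arc computations to linear
arithmetic. -/
structure IsCycleEnum (G : SimpleGraph V) (n : ℕ) (c : ℕ → V) : Prop where
  three_le : 3 ≤ n
  periodic : Function.Periodic c n
  ne : ∀ ⦃i j⦄, i < j → j < i + n → c i ≠ c j
  adj_iff : ∀ ⦃i j⦄, i < j → j < i + n → (G.Adj (c i) (c j) ↔ j = i + 1 ∨ j + 1 = i + n)

/-- `S` is the vertex set of an induced cycle of `G`. -/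
def IsInducedCycle (G : SimpleGraph V) (S : Set V) : Prop :=
  ∃ n c, IsCycleEnum G n c ∧ Set.range c = S

/-- The vertices `p` and `q` split the cycle `S` into the two arcs `A` and `B`. -/
structure ArcSplit (G : SimpleGraph V) (S : Set V) (p q : V) (A B : Set V) : Prop where
  ne : p ≠ q
  not_adj : ¬ G.Adj p q
  eq_union : S = A ∪ B ∪ {p, q}
  left : Links G p q A
  right : Links G p q B
  disjoint : Disjoint A B
  not_touch : ¬ Touch G A B

namespace IsCycleEnum

theorem shift (h : IsCycleEnum G n c) (k : ℕ) : IsCycleEnum G n fun i => c (i + k) where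
  three_le := h.three_le
  periodic i := by simpa only [add_right_comm] using h.periodic (i + k)
  ne i j hij hjn := h.ne (by omega) (by omega)
  adj_iff i j hij hjn := by
    rw [h.adj_iff (by omega) (by omega)]
    omega

theorem of_lt (hn : 3 ≤ n) (hne : ∀ i j, i < j → j < n → c i ≠ c j)
    (hadj : ∀ i j, i < j → j < n → (G.Adj (c i) (c j) ↔ j = i + 1 ∨ j + 1 = i + n)) :
    IsCycleEnum G n fun i => c (i % n) := by
  have key : ∀ i j, i < j → j < i + n → i % n < n ∧ j % n < n ∧
      (j % n = i % n + (j - i) ∨ j % n + n = i % n + (j - i)) := by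
    intro i j hij hjn
    obtain ⟨d, rfl⟩ := Nat.exists_eq_add_of_lt hij
    have hd : (d + 1) % n = d + 1 := Nat.mod_eq_of_lt (by omega)
    have := Nat.mod_add_mod i n (d + 1)
    have hi := Nat.mod_lt i (show 0 < n by omega)
    refine ⟨hi, Nat.mod_lt _ (by omega), ?_⟩
    rcases lt_or_ge (i % n + (d + 1)) n with hlt | hge
    · have := Nat.add_mod_of_add_mod_lt (by rwa [hd] : i % n + (d + 1) % n < n)
      rw [add_assoc]; omega
    · have := Nat.add_mod_add_of_le_add_mod (by rwa [hd] : n ≤ i % n + (d + 1) % n)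
      rw [add_assoc]; omega
  refine ⟨hn, fun i => by simp, fun i j hij hjn => ?_, fun i j hij hjn => ?_⟩
  · obtain ⟨hi, hj, h | h⟩ := key i j hij hjn
    · exact hne _ _ (by omega) hj
    · exact (hne _ _ (by omega) hi).symm
  · obtain ⟨hi, hj, h | h⟩ := key i j hij hjn
    · rw [hadj _ _ (by omega) hj]; omega
    · rw [G.adj_comm, hadj _ _ (by omega) hi]; omega

theorem map {c : ℕ → W} (h : IsCycleEnum H n c) (f : H ↪g G) : IsCycleEnum G n (f ∘ c) where
  three_le := h.three_le
  periodic := h.periodic.comp f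
  ne _ _ hij hjn := f.injective.ne (h.ne hij hjn)
  adj_iff _ _ hij hjn := f.map_adj_iff.trans (h.adj_iff hij hjn)

theorem exists_eq (h : IsCycleEnum G n c) (hx : x ∈ Set.range c) (k : ℕ) :
    ∃ i, k ≤ i ∧ i < k + n ∧ c i = x := by
  have hn := h.three_le
  induction k with
  | zero =>
    obtain ⟨i, rfl⟩ := hx
    exact ⟨i % n, by omega, by simpa using Nat.mod_lt i (by omega), h.periodic.map_mod_nat i⟩
  | succ k ih =>
    obtain ⟨i, hki, hik, rfl⟩ := ih
    rcases hki.eq_or_lt with rfl | hki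
    · exact ⟨k + n, by omega, by omega, h.periodic k⟩
    · exact ⟨i, hki, by omega, rfl⟩

theorem range_shift (h : IsCycleEnum G n c) (k : ℕ) :
    (Set.range fun i => c (i + k)) = Set.range c := by
  refine (Set.range_comp_subset_range (· + k) c).antisymm fun x hx => ?_
  obtain ⟨i, hki, -, rfl⟩ := h.exists_eq hx k
  exact ⟨i - k, by simp [Nat.sub_add_cancel hki]⟩

theorem adj_succ (h : IsCycleEnum G n c) (i : ℕ) : G.Adj (c i) (c (i + 1)) :=
  (h.adj_iff (by omega) (by have := h.three_le; omega)).2 (.inl rfl)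

theorem connected_image_Ico (h : IsCycleEnum G n c) (hij : i < j) :
    (G.induce (c '' Set.Ico i j)).Connected := by
  induction j, hij using Nat.le_induction with
  | base =>
    have hi : Set.Ico i (i + 1) = {i} := Set.ext fun k => by
      rw [Set.mem_Ico, Set.mem_singleton_iff]; omega
    rw [Nat.succ_eq_add_one, hi, Set.image_singleton]
    exact connected_induce_singleton (c i)
  | succ j hij ih =>
    have hj : Set.Ico i (j + 1) = insert j (Set.Ico i j) := Set.ext fun k => by
      rw [Set.mem_Ico, Set.mem_insert_iff, Set.mem_Ico]; omega
    rw [hj, Set.image_insert_eq]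
    have hs := h.adj_succ (j - 1)
    rw [Nat.sub_add_cancel (by omega)] at hs
    exact connected_induce_insert ih ⟨j - 1, ⟨by omega, by omega⟩, rfl⟩ hs

theorem links (h : IsCycleEnum G n c) (hij : i + 2 ≤ j) (hjn : j < i + n) :
    Links G (c i) (c j) (c '' Set.Ico (i + 1) j) where
  connected := h.connected_image_Ico hij
  left_notMem := by
    rintro ⟨k, ⟨hk, hkj⟩, hc⟩
    exact h.ne (by omega) (by omega) hc.symm
  right_notMem := by
    rintro ⟨k, ⟨hk, hkj⟩, hc⟩
    exact h.ne hkj (by omega) hc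
  touch_left := ⟨_, rfl, _, ⟨i + 1, ⟨le_rfl, hij⟩, rfl⟩, h.adj_succ i⟩
  touch_right := by
    obtain ⟨j, rfl⟩ := Nat.exists_eq_add_of_lt (show 0 < j by omega)
    exact ⟨_, rfl, _, ⟨0 + j, ⟨by omega, by omega⟩, rfl⟩, (h.adj_succ (0 + j)).symm⟩

theorem range_eq_image_Ico (h : IsCycleEnum G n c) : Set.range c = c '' Set.Ico 0 n := by
  refine Set.Subset.antisymm (fun x hx => ?_) (Set.image_subset_range _ _)
  obtain ⟨i, -, hi, rfl⟩ := h.exists_eq hx 0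
  exact ⟨i, ⟨i.zero_le, by omega⟩, rfl⟩

theorem injOn (h : IsCycleEnum G n c) : Set.InjOn c (Set.Ico 0 n) := by
  intro i hi j hj hij
  simp only [Set.mem_Ico] at hi hj
  by_contra hne
  rcases Nat.lt_or_gt_of_ne hne with hlt | hlt
  · exact h.ne hlt (by omega) hij
  · exact h.ne hlt (by omega) hij.symm

theorem ncard_range (h : IsCycleEnum G n c) : (Set.range c).ncard = n := by
  rw [h.range_eq_image_Ico, h.injOn.ncard_image, Set.ncard_eq_toFinset_card']
  simp

theorem arcSplit (h : IsCycleEnum G n c) (hm : 2 ≤ m) (hmn : m + 2 ≤ n) :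
    ArcSplit G (Set.range c) (c 0) (c m) (c '' Set.Ico 1 m) (c '' Set.Ico (m + 1) n) where
  ne := h.ne (by omega) (by omega)
  not_adj := by
    rw [h.adj_iff (by omega) (by omega)]
    omega
  eq_union := by
    have : Set.Ico 0 n = Set.Ico 1 m ∪ Set.Ico (m + 1) n ∪ {0, m} := by
      ext i
      simp only [Set.mem_Ico, Set.mem_union, Set.mem_insert_iff, Set.mem_singleton_iff]
      omega
    rw [h.range_eq_image_Ico, this, Set.image_union, Set.image_union, Set.image_pair]
  left := by simpa using h.links (i := 0) (j := m) (by omega) (by omega)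
  right := by
    have := h.links (i := m) (j := n) (by omega) (by omega)
    rw [← zero_add n, h.periodic 0, zero_add] at this
    exact this.symm
  disjoint := by
    rw [Set.disjoint_left]
    rintro _ ⟨i, hi, rfl⟩ ⟨j, hj, hij⟩
    simp only [Set.mem_Ico] at hi hj
    exact h.ne (by omega) (by omega) hij.symm
  not_touch := by
    rintro ⟨_, ⟨i, hi, rfl⟩, _, ⟨j, hj, rfl⟩, hij⟩
    simp only [Set.mem_Ico] at hi hj
    rw [h.adj_iff (by omega) (by omega)] at hij
    omega

theorem neighborSet_inter_range (h : IsCycleEnum G n c) (i : ℕ) :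
    G.neighborSet (c i) ∩ Set.range c = {c (i + 1), c (i + (n - 1))} := by
  have hn := h.three_le
  ext y
  simp only [Set.mem_inter_iff, mem_neighborSet, Set.mem_insert_iff, Set.mem_singleton_iff]
  constructor
  · rintro ⟨hadj, hy⟩
    obtain ⟨j, hij, hjn, rfl⟩ := h.exists_eq hy i
    rcases hij.eq_or_lt with rfl | hij
    · exact (G.irrefl hadj).elim
    · rcases (h.adj_iff hij hjn).1 hadj with rfl | hj
      · exact .inl rfl
      · exact .inr (congrArg c (by omega))
  · rintro (rfl | rfl)
    · exact ⟨h.adj_succ i, _, rfl⟩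
    · exact ⟨(h.adj_iff (by omega) (by omega)).2 (.inr (by omega)), _, rfl⟩

end IsCycleEnum

namespace ArcSplit

theorem symm (h : ArcSplit G S p q A B) : ArcSplit G S p q B A :=
  ⟨h.ne, h.not_adj, h.eq_union.trans (by rw [Set.union_comm A]), h.right, h.left, h.disjoint.symm,
    fun hBA => h.not_touch hBA.symm⟩

theorem left_subset (h : ArcSplit G S p q A B) : A ⊆ S := by
  rw [h.eq_union]
  exact Set.subset_union_left.trans Set.subset_union_left

theorem right_subset (h : ArcSplit G S p q A B) : B ⊆ S :=
  h.symm.left_subset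

theorem left_mem (h : ArcSplit G S p q A B) : p ∈ S :=
  h.eq_union ▸ .inr (.inl rfl)

theorem right_mem (h : ArcSplit G S p q A B) : q ∈ S :=
  h.eq_union ▸ .inr (.inr rfl)

theorem mem_or_mem (h : ArcSplit G S p q A B) (ha : a ∈ A) (hb : b ∈ B) (hM : Links G a b M)
    (hMS : M ⊆ S) : p ∈ M ∨ q ∈ M := by
  by_contra! hpq
  obtain ⟨hp, hq⟩ := hpq
  have hconn : (G.induce (insert a M)).Connected :=
    hM.touch_left.connected_union (connected_induce_singleton a) hM.connected
  have hMAB : M ⊆ A ∪ B := by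
    intro x hx
    have hxS := hMS hx
    rw [h.eq_union] at hxS
    obtain hx' | rfl | rfl := hxS
    exacts [hx', absurd hx hp, absurd hx hq]
  obtain ⟨_, rfl, y, hyM, hby⟩ := hM.touch_right
  have hyA : y ∉ A := fun hyA => h.not_touch ⟨y, hyA, _, hb, hby.symm⟩
  obtain ⟨u, hu, w, ⟨hw, hwA⟩, huw⟩ :=
    exists_adj_of_mem_of_notMem hconn (Set.mem_insert a M) ha (.inr hyM) hyA
  have hwM : w ∈ M := hw.resolve_left fun hwa => hwA (hwa ▸ ha)
  exact h.not_touch ⟨u, hu.2, w, (hMAB hwM).resolve_left hwA, huw⟩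

end ArcSplit

namespace IsInducedCycle

theorem exists_isCycleEnum (hS : IsInducedCycle G S) (hx : x ∈ S) :
    ∃ n c, IsCycleEnum G n c ∧ Set.range c = S ∧ c 0 = x := by
  obtain ⟨n, c, hc, rfl⟩ := hS
  obtain ⟨k, rfl⟩ := hx
  exact ⟨n, _, hc.shift k, hc.range_shift k, by simp⟩

theorem connected (hS : IsInducedCycle G S) : (G.induce S).Connected := by
  obtain ⟨n, c, hc, rfl⟩ := hS
  rw [hc.range_eq_image_Ico]
  exact hc.connected_image_Ico (by have := hc.three_le; omega)

protected theorem finite (hS : IsInducedCycle G S) : S.Finite := by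
  obtain ⟨n, c, hc, rfl⟩ := hS
  rw [hc.range_eq_image_Ico]
  exact (Set.finite_Ico 0 n).image c

theorem three_le_ncard (hS : IsInducedCycle G S) : 3 ≤ S.ncard := by
  obtain ⟨n, c, hc, rfl⟩ := hS
  exact hc.ncard_range ▸ hc.three_le

theorem ncard_neighborSet_inter (hS : IsInducedCycle G S) (hx : x ∈ S) :
    (G.neighborSet x ∩ S).ncard = 2 := by
  obtain ⟨n, c, hc, rfl⟩ := hS
  obtain ⟨i, rfl⟩ := hx
  have hn := hc.three_le
  rw [hc.neighborSet_inter_range, Set.ncard_pair (hc.ne (by omega) (by omega))]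

theorem neighborSet_inter_eq_of_subset (hS : IsInducedCycle G S) (hT : IsInducedCycle G T)
    (hxS : x ∈ S) (hxT : x ∈ T) (h : G.neighborSet x ∩ S ⊆ T) :
    G.neighborSet x ∩ S = G.neighborSet x ∩ T :=
  Set.eq_of_subset_of_ncard_le (Set.subset_inter Set.inter_subset_left h)
    (by rw [hS.ncard_neighborSet_inter hxS, hT.ncard_neighborSet_inter hxT])
    (hT.finite.subset Set.inter_subset_right)

theorem eq_of_subset (hS : IsInducedCycle G S) (hT : IsInducedCycle G T) (hST : S ⊆ T) :
    S = T := by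
  refine hST.antisymm fun y hyT => by_contra fun hyS => ?_
  obtain ⟨x, hx⟩ := nonempty_of_connected_induce hS.connected
  obtain ⟨a, ⟨haT, haS⟩, b, ⟨hbT, hbS⟩, hab⟩ :=
    exists_adj_of_mem_of_notMem hT.connected (hST hx) hx hyT hyS
  have hb : b ∈ G.neighborSet a ∩ T := ⟨hab, hbT⟩
  rw [← hS.neighborSet_inter_eq_of_subset hT haS haT (Set.inter_subset_right.trans hST)] at hb
  exact hbS hb.2

theorem adj_of_ncard_eq_three (hS : IsInducedCycle G S) (h : S.ncard = 3) (hx : x ∈ S)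
    (hy : y ∈ S) (hxy : x ≠ y) : G.Adj x y := by
  have hsub : G.neighborSet x ∩ S ⊆ S \ {x} := fun z hz => ⟨hz.2, hz.1.ne'⟩
  have heq := Set.eq_of_subset_of_ncard_le hsub
    (by rw [hS.ncard_neighborSet_inter hx, Set.ncard_sdiff_singleton_of_mem hx, h])
    (hS.finite.subset Set.sdiff_subset)
  exact (heq ▸ ⟨hy, hxy.symm⟩ : y ∈ G.neighborSet x ∩ S).1

theorem exists_arcSplit (hS : IsInducedCycle G S) (hp : p ∈ S) (hq : q ∈ S) (hpq : p ≠ q)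
    (hadj : ¬ G.Adj p q) : ∃ A B, ArcSplit G S p q A B := by
  obtain ⟨n, c, hc, rfl, rfl⟩ := hS.exists_isCycleEnum hp
  obtain ⟨m, -, hmn, rfl⟩ := hc.exists_eq hq 0
  have hm : m ≠ 0 := by rintro rfl; exact hpq rfl
  rw [hc.adj_iff (by omega) hmn] at hadj
  exact ⟨_, _, hc.arcSplit (by omega) (by omega)⟩

theorem links_sdiff_pair (hS : IsInducedCycle G S) (hp : p ∈ S) (hq : q ∈ S)
    (hadj : G.Adj p q) : Links G p q (S \ {p, q}) := by
  obtain ⟨n, c, hc, rfl, rfl⟩ := hS.exists_isCycleEnum hp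
  obtain ⟨m, -, hmn, rfl⟩ := hc.exists_eq hq 0
  have hn := hc.three_le
  have hm : m ≠ 0 := by rintro rfl; exact G.irrefl hadj
  have himage : ∀ i j, Set.Ico 0 n \ {0, m} = Set.Ico i j →
      Set.range c \ {c 0, c m} = c '' Set.Ico i j := by
    intro i j hij
    rw [← hij, hc.range_eq_image_Ico, ← Set.image_pair, hc.injOn.image_sdiff_subset]
    exact Set.insert_subset (by simp; omega) (by simpa using hmn)
  rcases (hc.adj_iff (by omega) hmn).1 hadj with hm | hm
  · rw [himage 2 n (by ext i; simp; omega)]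
    have := hc.links (i := 1) (j := n) (by omega) (by omega)
    rw [← zero_add n, hc.periodic 0, zero_add] at this
    rw [hm]
    exact this.symm
  · rw [himage 1 (n - 1) (by ext i; simp; omega), show m = n - 1 by omega]
    simpa using hc.links (i := 0) (j := n - 1) (by omega) (by omega)

theorem exists_arcSplit_disjoint (hS : IsInducedCycle G S) (hST : ¬ S ⊆ T)
    (h : 3 ≤ (S ∩ T).ncard) :
    ∃ p ∈ T, ∃ q ∈ T, ∃ A B, ArcSplit G S p q A B ∧ Disjoint A T := by
  obtain ⟨y, hyS, hyT⟩ := Set.not_subset.1 hST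
  obtain ⟨n, c, hc, rfl, rfl⟩ := hS.exists_isCycleEnum hyS
  set I : Set ℕ := {i | i < n ∧ c i ∈ T}
  have hIfin : I.Finite := (Set.finite_lt_nat n).subset fun i hi => hi.1
  have hI3 : 3 ≤ I.ncard := by
    refine h.trans (le_trans (Set.ncard_le_ncard ?_ (hIfin.image c)) (Set.ncard_image_le hIfin))
    rintro _ ⟨hx, hxT⟩
    obtain ⟨i, -, hi, rfl⟩ := hc.exists_eq hx 0
    exact ⟨i, ⟨by omega, hxT⟩, rfl⟩
  have hIne : I.Nonempty := Set.nonempty_of_ncard_ne_zero (by omega)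
  obtain ⟨i, hi, hmin⟩ := Set.exists_min_image I id hIfin hIne
  obtain ⟨m, hm, hmax⟩ := Set.exists_max_image I id hIfin hIne
  simp only [id] at hmin hmax
  have hi0 : i ≠ 0 := fun h0 => hyT (h0 ▸ hi.2)
  have him : 3 ≤ m + 1 - i := hI3.trans <| by
    have hI : I ⊆ Finset.Icc i m := fun j hj => Finset.mem_coe.2 <|
      Finset.mem_Icc.2 ⟨hmin j hj, hmax j hj⟩
    simpa only [Set.ncard_coe_finset, Nat.card_Icc] using Set.ncard_le_ncard hI
  have hmn := hm.1
  have hsplit := (hc.shift i).arcSplit (m := m - i) (by omega) (by omega)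
  simp only [hc.range_shift, zero_add, Nat.sub_add_cancel (show i ≤ m by omega)] at hsplit
  refine ⟨_, hi.2, _, hm.2, _, _, hsplit.symm, Set.disjoint_left.2 ?_⟩
  rintro _ ⟨k, hk, rfl⟩ hkT
  simp only [Set.mem_Ico] at hk
  rcases lt_or_ge (k + i) n with hkn | hkn
  · have := hmax (k + i) ⟨hkn, hkT⟩
    omega
  · obtain ⟨j, hj⟩ := Nat.exists_eq_add_of_le' hkn
    simp only [hj, hc.periodic j] at hkT
    have := hmin j ⟨by omega, hkT⟩
    omega

end IsInducedCycle

end InducedCycles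

/-! ### Peripheral cycles in planar graphs -/

section Peripheral

variable {G : SimpleGraph V} {A B R S S₁ S₂ : Set V} {p q x y : V}

/-- A peripheral cycle: an induced cycle whose deletion leaves a connected graph. In a
`3`-connected planar graph these are the facial cycles. -/
structure IsPeripheral (G : SimpleGraph V) (S : Set V) : Prop where
  isInducedCycle : IsInducedCycle G S
  connected_compl : (G.induce Sᶜ).Connected

theorem IsPeripheral.exists_connected_touch_of_left_subset
    (hdeg : ∀ x, 3 ≤ (G.neighborSet x).ncard)
    (hS₁ : IsInducedCycle G S₁) (hS₂ : IsPeripheral G S₂) (hne : S₁ ≠ S₂)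
    (hsplit : ArcSplit G S₁ p q A B) (hp : p ∈ S₂) (hq : q ∈ S₂) (hA : A ⊆ S₂) :
    ∃ D, (G.induce D).Connected ∧ D ⊆ (S₁ ∪ S₂)ᶜ ∧ Touch G D A ∧ Touch G D B := by
  have hsub : ∀ {z}, z ∈ S₁ → z ∉ B → z ∈ S₂ := by
    intro z hz hzB
    rw [hsplit.eq_union] at hz
    obtain (hz | hz) | rfl | rfl := hz
    exacts [hA hz, absurd hz hzB, hp, hq]
  obtain ⟨a, ha⟩ := nonempty_of_connected_induce hsplit.left.connected
  have haS₁ := hsplit.left_subset ha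
  have hnbr : G.neighborSet a ∩ S₁ = G.neighborSet a ∩ S₂ :=
    hS₁.neighborSet_inter_eq_of_subset hS₂.isInducedCycle haS₁ (hA ha) fun z hz =>
      hsub hz.2 fun hzB => hsplit.not_touch ⟨a, ha, z, hzB, hz.1⟩
  obtain ⟨y, hay, hyS₁⟩ : ∃ y ∈ G.neighborSet a, y ∉ S₁ := by
    by_contra! h
    have := hS₁.ncard_neighborSet_inter haS₁
    rw [Set.inter_eq_left.2 h] at this
    have := hdeg a
    omega
  have hyS₂ : y ∉ S₂ := fun h => hyS₁ (hnbr ▸ ⟨hay, h⟩ : y ∈ G.neighborSet a ∩ S₁).2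
  have hBS₂ : (S₂ᶜ ∩ B).Nonempty := by
    obtain ⟨b, hb, hbS₂⟩ := Set.not_subset.1 fun h =>
      hne (hS₁.eq_of_subset hS₂.isInducedCycle h)
    exact ⟨b, hbS₂, by_contra fun hbB => hbS₂ (hsub hb hbB)⟩
  obtain ⟨D, hD, hyD⟩ := exists_isComponentIn_of_mem (G := G) (R := S₂ᶜ \ B)
    ⟨hyS₂, fun h => hyS₁ (hsplit.right_subset h)⟩
  refine ⟨D, hD.connected, fun z hz => ?_, ⟨y, hyD, a, ha, hay.symm⟩,
    hD.touch hS₂.connected_compl hBS₂⟩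
  rintro (h | h)
  exacts [(hD.subset hz).1 (hsub h (hD.subset hz).2), (hD.subset hz).1 h]

theorem IsPeripheral.exists_connected_touch (hdeg : ∀ x, 3 ≤ (G.neighborSet x).ncard)
    (hS₁ : IsInducedCycle G S₁) (hS₂ : IsPeripheral G S₂) (hne : S₁ ≠ S₂)
    (hsplit : ArcSplit G S₁ p q A B) (hp : p ∈ S₂) (hq : q ∈ S₂) :
    ∃ D, (G.induce D).Connected ∧ D ⊆ (S₁ ∪ S₂)ᶜ ∧ Touch G D A ∧ Touch G D B := by
  by_cases hA : A ⊆ S₂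
  · exact hS₂.exists_connected_touch_of_left_subset hdeg hS₁ hne hsplit hp hq hA
  by_cases hB : B ⊆ S₂
  · obtain ⟨D, hD, hDS, hDB, hDA⟩ :=
      hS₂.exists_connected_touch_of_left_subset hdeg hS₁ hne hsplit.symm hp hq hB
    exact ⟨D, hD, hDS, hDA, hDB⟩
  obtain h | ⟨D, hD, hDA, hDB⟩ := touch_or_exists_isComponentIn hS₂.connected_compl
    (A := A \ S₂) (B := B \ S₂) (fun z hz => hz.2) (fun z hz => hz.2)
    (Set.sdiff_nonempty.2 hA) (Set.sdiff_nonempty.2 hB)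
    (hsplit.disjoint.mono Set.sdiff_subset Set.sdiff_subset)
  · exact absurd (h.mono Set.sdiff_subset Set.sdiff_subset) hsplit.not_touch
  · refine ⟨D, hD.connected, fun z hz => ?_, hDA.mono subset_rfl Set.sdiff_subset,
      hDB.mono subset_rfl Set.sdiff_subset⟩
    obtain ⟨hzS₂, hzAB⟩ := hD.subset hz
    rintro (h | h)
    · rw [hsplit.eq_union] at h
      obtain (h | h) | rfl | rfl := h
      exacts [hzAB (.inl ⟨h, hzS₂⟩), hzAB (.inr ⟨h, hzS₂⟩), hzS₂ hp, hzS₂ hq]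
    · exact hzS₂ h

theorem IsPeripheral.eq_of_three_le_ncard_inter (hdeg : ∀ x, 3 ≤ (G.neighborSet x).ncard)
    (hK : ¬ HasMinor G (completeBipartiteGraph (Fin 3) (Fin 3))) (hS₁ : IsPeripheral G S₁)
    (hS₂ : IsPeripheral G S₂) (h : 3 ≤ (S₁ ∩ S₂).ncard) : S₁ = S₂ := by
  by_contra hne
  obtain ⟨p, hp, q, hq, Q, M, hQM, hQ⟩ := hS₂.isInducedCycle.exists_arcSplit_disjoint (T := S₁)
    (fun h => hne (hS₂.isInducedCycle.eq_of_subset hS₁.isInducedCycle h).symm)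
    (by rwa [Set.inter_comm])
  obtain ⟨A, B, hAB⟩ := hS₁.isInducedCycle.exists_arcSplit hp hq hQM.ne hQM.not_adj
  obtain ⟨D₀, hD₀, hD₀S, hD₀A, hD₀B⟩ := hS₂.exists_connected_touch hdeg hS₁.isInducedCycle hne
    hAB hQM.left_mem hQM.right_mem
  obtain ⟨D, hD, hD₀D⟩ := exists_isComponentIn hD₀ (R := S₁ᶜ \ Q) fun z hz =>
    ⟨fun h => hD₀S hz (.inl h), fun h => hD₀S hz (.inr (hQM.left_subset h))⟩
  have hQS₁ : (S₁ᶜ ∩ Q).Nonempty := by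
    obtain ⟨z, hz⟩ := nonempty_of_connected_induce hQM.left.connected
    exact ⟨z, hQ.notMem_of_mem_left hz, hz⟩
  have hDS₁ : Disjoint D S₁ := Set.disjoint_left.2 fun z hz => (hD.subset hz).1
  refine hK (hasMinor_completeBipartiteGraph_of_links (A := ![A, B, Q]) (D := D) hAB.ne ?_ ?_
    hD.connected (hDS₁.notMem_of_mem_right hp) (hDS₁.notMem_of_mem_right hq) ?_ ?_)
  · intro i
    fin_cases i
    exacts [hAB.left, hAB.right, hQM.left]
  · have hAQ := (hQ.mono_right hAB.left_subset).symm
    have hBQ := (hQ.mono_right hAB.right_subset).symm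
    intro i j hij
    fin_cases i <;> fin_cases j <;> simp_all [hAB.disjoint, hAB.disjoint.symm, disjoint_comm]
  · intro i
    fin_cases i
    exacts [hDS₁.mono_right hAB.left_subset, hDS₁.mono_right hAB.right_subset,
      Set.disjoint_left.2 fun z hz => (hD.subset hz).2]
  · intro i
    fin_cases i
    exacts [hD₀A.mono hD₀D subset_rfl, hD₀B.mono hD₀D subset_rfl,
      hD.touch hS₁.connected_compl hQS₁]

theorem hasMinor_of_links_of_touch_or_component {P : Fin 3 → Set V} (hpq : G.Adj p q)
    (hP : ∀ i, Links G p q (P i)) (hPP : Pairwise fun i j => Disjoint (P i) (P j))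
    (hpR : p ∉ R) (hqR : q ∉ R) (hPR : ∀ i, Disjoint (P i) R)
    (h : ∀ i, Touch G (P i) (P (i + 1)) ∨
      ∃ F, IsComponentIn G R F ∧ Touch G F (P i) ∧ Touch G F (P (i + 1))) :
    HasMinor G (completeGraph (Fin 5)) ∨
      HasMinor G (completeBipartiteGraph (Fin 3) (Fin 3)) := by
  by_cases hD : ∃ D, IsComponentIn G R D ∧ ∀ i, Touch G D (P i)
  · obtain ⟨D, hD, hDP⟩ := hD
    exact .inr (hasMinor_completeBipartiteGraph_of_links hpq.ne hP hPP hD.connected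
      (fun h => hpR (hD.subset h)) (fun h => hqR (hD.subset h))
      (fun i => ((hPR i).mono_right hD.subset).symm) hDP)
  have hex : ∀ i, ∃ F ⊆ R, (G.induce (P i ∪ F)).Connected ∧ Touch G (P i ∪ F) (P (i + 1)) ∧
      ∀ x ∈ F, IsComponentIn G R F ∧ Touch G F (P i) ∧ Touch G F (P (i + 1)) := by
    intro i
    obtain h | ⟨F, hF, hFP, hFP'⟩ := h i
    · exact ⟨∅, Set.empty_subset R, (Set.union_empty (P i)).symm ▸ (hP i).connected,
        by simpa using h, by simp⟩
    · exact ⟨F, hF.subset, hFP.symm.connected_union (hP i).connected hF.connected,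
        hFP'.mono Set.subset_union_right subset_rfl, fun _ _ => ⟨hF, hFP, hFP'⟩⟩
  choose F hFR hconn htouch hF using hex
  have hthree : ∀ i j k : Fin 3, i ≠ j → k = i ∨ k = i + 1 ∨ k = j ∨ k = j + 1 := by decide
  have hFF : Pairwise fun i j => Disjoint (F i) (F j) := by
    intro i j hij
    refine Set.disjoint_left.2 fun x hxi hxj => hD ⟨F i, (hF i x hxi).1, fun k => ?_⟩
    have heq := (hF i x hxi).1.eq_of_mem (hF j x hxj).1 hxi hxj
    obtain rfl | rfl | rfl | rfl := hthree i j k hij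
    exacts [(hF k x hxi).2.1, (hF i x hxi).2.2, heq ▸ (hF k x hxj).2.1, heq ▸ (hF j x hxj).2.2]
  refine .inl (hasMinor_completeGraph_of_links (A := fun i => P i ∪ F i) hpq (fun i => ?_) ?_ ?_)
  · exact ⟨hconn i, fun h => h.elim (hP i).left_notMem fun h => hpR (hFR i h),
      fun h => h.elim (hP i).right_notMem fun h => hqR (hFR i h),
      (hP i).touch_left.mono subset_rfl Set.subset_union_left,
      (hP i).touch_right.mono subset_rfl Set.subset_union_left⟩
  · intro i j hij
    simp only [Set.disjoint_union_left, Set.disjoint_union_right]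
    exact ⟨⟨hPP hij, ((hPR j).mono_right (hFR i)).symm⟩, (hPR i).mono_right (hFR j), hFF hij⟩
  · intro i j hij
    obtain rfl | rfl : j = i + 1 ∨ i = j + 1 := by decide +revert
    · exact (htouch i).mono subset_rfl Set.subset_union_left
    · exact ((htouch j).mono subset_rfl Set.subset_union_left).symm

theorem IsPeripheral.inter_eq_pair (hdeg : ∀ x, 3 ≤ (G.neighborSet x).ncard)
    (hK : ¬ HasMinor G (completeBipartiteGraph (Fin 3) (Fin 3))) (hS₁ : IsPeripheral G S₁)
    (hS₂ : IsPeripheral G S₂) (hne : S₁ ≠ S₂) (hxy : x ≠ y) (hx : x ∈ S₁ ∩ S₂)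
    (hy : y ∈ S₁ ∩ S₂) : S₁ ∩ S₂ = {x, y} := by
  refine (Set.eq_of_subset_of_ncard_le (Set.pair_subset hx hy) ?_
    (hS₁.isInducedCycle.finite.subset Set.inter_subset_left)).symm
  rw [Set.ncard_pair hxy]
  by_contra! h
  exact hne (hS₁.eq_of_three_le_ncard_inter hdeg hK hS₂ h)

theorem IsPlanar.not_injective_of_isPeripheral (hG : IsPlanar G)
    (hdeg : ∀ x, 3 ≤ (G.neighborSet x).ncard) (hxy : G.Adj x y) {C : Fin 3 → Set V}
    (hC : ∀ i, IsPeripheral G (C i) ∧ x ∈ C i ∧ y ∈ C i) : ¬ Function.Injective C := by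
  intro hinj
  have hinter : ∀ i j, i ≠ j → C i ∩ C j = {x, y} := fun i j hij =>
    (hC i).1.inter_eq_pair hdeg hG.2 (hC j).1 (hinj.ne hij) hxy.ne ⟨(hC i).2.1, (hC j).2.1⟩
      ⟨(hC i).2.2, (hC j).2.2⟩
  have hsub : ∀ i j, i ≠ j → C i \ {x, y} ⊆ (C j)ᶜ := fun i j hij z hz hzj =>
    hz.2 (hinter i j hij ▸ ⟨hz.1, hzj⟩)
  have hPP : Pairwise fun i j => Disjoint (C i \ {x, y}) (C j \ {x, y}) := fun i j hij =>
    Set.disjoint_left.2 fun z hzi hzj => hsub i j hij hzi hzj.1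
  have hP i := (hC i).1.isInducedCycle.links_sdiff_pair (hC i).2.1 (hC i).2.2 hxy
  have hR : ∀ i : Fin 3,
      (C (i + 2))ᶜ \ (C i \ {x, y} ∪ C (i + 1) \ {x, y}) = (⋃ i, C i)ᶜ := by
    intro i
    ext z
    have hz : (∃ j, z ∈ C j) ↔ z ∈ C i ∨ z ∈ C (i + 1) ∨ z ∈ C (i + 2) := by
      refine ⟨fun ⟨j, hj⟩ => ?_, by rintro (h | h | h) <;> exact ⟨_, h⟩⟩
      obtain rfl | rfl | rfl : j = i ∨ j = i + 1 ∨ j = i + 2 := by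
        clear * - ; decide +revert
      exacts [.inl hj, .inr (.inl hj), .inr (.inr hj)]
    have hxz : z = x → z ∈ C (i + 2) := fun h => h ▸ (hC _).2.1
    have hyz : z = y → z ∈ C (i + 2) := fun h => h ▸ (hC _).2.2
    simp only [Set.mem_sdiff, Set.mem_compl_iff, Set.mem_union, Set.mem_iUnion, hz,
      Set.mem_insert_iff, Set.mem_singleton_iff]
    tauto
  refine not_or.2 hG (hasMinor_of_links_of_touch_or_component hxy hP hPP (R := (⋃ i, C i)ᶜ)
    (fun h => h (Set.mem_iUnion.2 ⟨0, (hC 0).2.1⟩)) (fun h => h (Set.mem_iUnion.2 ⟨0, (hC 0).2.2⟩))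
    (fun i => Set.disjoint_left.2 fun z hz h => h (Set.mem_iUnion.2 ⟨i, hz.1⟩)) fun i => ?_)
  rw [← hR i]
  exact touch_or_exists_isComponentIn (hC (i + 2)).1.connected_compl
    (hsub i (i + 2) (by decide +revert)) (hsub (i + 1) (i + 2) (by decide +revert))
    (nonempty_of_connected_induce (hP i).connected)
    (nonempty_of_connected_induce (hP (i + 1)).connected)
    (hPP (by decide +revert))

theorem IsPlanar.ncard_isPeripheral_le_two (hG : IsPlanar G)
    (hdeg : ∀ x, 3 ≤ (G.neighborSet x).ncard) (hxy : G.Adj x y) :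
    {S | IsPeripheral G S ∧ x ∈ S ∧ y ∈ S}.ncard ≤ 2 := by
  by_contra! h
  obtain ⟨S, hS, T, hT, U, hU, hST, hSU, hTU⟩ :=
    (Set.two_lt_ncard (Set.finite_of_ncard_pos (by omega))).1 h
  refine hG.not_injective_of_isPeripheral hdeg hxy (C := ![S, T, U]) (fun i => ?_) fun i j => ?_
  · fin_cases i
    exacts [hS, hT, hU]
  · fin_cases i <;> fin_cases j <;> simp_all [eq_comm]

end Peripheral

/-! ### Balanced edge labellings -/

section Balance

variable {G : SimpleGraph V} {φ : Sym2 V → ZMod 2} {s t : V → ZMod 2} {A B C D U : Set V}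
  {p q x y u v : V} {c : ℕ → V} {n i j : ℕ}

/-- `s` is a potential for the edge labelling `φ` on `C`: on the edges inside `C`, the labelling
`φ` is the coboundary of `s`. -/
def IsPotentialOn (G : SimpleGraph V) (φ : Sym2 V → ZMod 2) (s : V → ZMod 2) (C : Set V) : Prop :=
  ∀ ⦃a⦄, a ∈ C → ∀ ⦃b⦄, b ∈ C → G.Adj a b → φ s(a, b) = s a + s b

/-- The edge labelling `φ` is balanced on `C` if it has a potential there; equivalently, `φ` sums to
zero over every cycle of the subgraph induced on `C`. -/
def BalancedOn (G : SimpleGraph V) (φ : Sym2 V → ZMod 2) (C : Set V) : Prop :=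
  ∃ s, IsPotentialOn G φ s C

theorem IsPotentialOn.mono (h : IsPotentialOn G φ s C) (hUC : U ⊆ C) : IsPotentialOn G φ s U :=
  fun _ ha _ hb => h (hUC ha) (hUC hb)

theorem BalancedOn.mono (h : BalancedOn G φ C) (hUC : U ⊆ C) : BalancedOn G φ U :=
  h.imp fun _ hs => hs.mono hUC

theorem BalancedOn.exists_potential_eq_zero (h : BalancedOn G φ C) (x : V) :
    ∃ s, IsPotentialOn G φ s C ∧ s x = 0 := by
  obtain ⟨s, hs⟩ := h
  refine ⟨fun y => s y + s x, fun a ha b hb hab => ?_, CharTwo.add_self_eq_zero _⟩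
  rw [hs ha hb hab, add_add_add_comm, CharTwo.add_self_eq_zero, add_zero]

theorem IsPotentialOn.eqOn (hs : IsPotentialOn G φ s C) (ht : IsPotentialOn G φ t C)
    (hC : (G.induce C).Connected) (hx : x ∈ C) (h : s x = t x) : Set.EqOn s t C := by
  by_contra hne
  simp only [Set.EqOn, not_forall] at hne
  obtain ⟨y, hy, hst⟩ := hne
  obtain ⟨a, ⟨ha, hsta⟩, b, ⟨hb, hstb⟩, hab⟩ :=
    exists_adj_of_mem_of_notMem (T := {z | s z = t z}) hC hx h hy hst
  have := (hs ha hb hab).symm.trans (ht ha hb hab)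
  rw [show s a = t a from hsta] at this
  exact hstb (add_left_cancel this)

theorem BalancedOn.of_cover {ι : Type*} {U : ι → Set V} (hx : ∀ i, x ∈ U i)
    (hU : Pairwise fun i j => (G.induce (U i ∩ U j)).Connected)
    (hφ : ∀ i, BalancedOn G φ (U i))
    (hC : ∀ a ∈ C, ∀ b ∈ C, G.Adj a b → ∃ i, a ∈ U i ∧ b ∈ U i) : BalancedOn G φ C := by
  classical
  choose s hs hsx using fun i => (hφ i).exists_potential_eq_zero x
  have hagree : ∀ i j y, y ∈ U i → y ∈ U j → s i y = s j y := by
    intro i j y hi hj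
    rcases eq_or_ne i j with rfl | hij
    · rfl
    · exact ((hs i).mono Set.inter_subset_left).eqOn ((hs j).mono Set.inter_subset_right) (hU hij)
        ⟨hx i, hx j⟩ ((hsx i).trans (hsx j).symm) ⟨hi, hj⟩
  let t : V → ZMod 2 := fun y => if h : ∃ i, y ∈ U i then s h.choose y else 0
  have ht : ∀ i y, y ∈ U i → t y = s i y := by
    intro i y hy
    have h : ∃ i, y ∈ U i := ⟨i, hy⟩
    exact (dif_pos h).trans (hagree _ i y h.choose_spec hy)
  refine ⟨t, fun a ha b hb hab => ?_⟩
  obtain ⟨i, hai, hbi⟩ := hC a ha b hb hab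
  rw [ht i a hai, ht i b hbi, hs i hai hbi hab]

theorem ArcSplit.balancedOn_of_ear (h : ArcSplit G C p q A B) (hD : (G.induce D).Connected)
    (hp : Touch G {p} D) (hq : Touch G {q} D) (hA : BalancedOn G φ (A ∪ {p, q} ∪ D))
    (hB : BalancedOn G φ (B ∪ {p, q} ∪ D)) : BalancedOn G φ C := by
  have hear : (G.induce ({p, q} ∪ D)).Connected := by
    rw [Set.insert_union]
    exact (hp.mono subset_rfl Set.subset_union_right).connected_union
      (connected_induce_singleton p) (hq.connected_union (connected_induce_singleton q) hD)
  have hinter : (A ∪ {p, q} ∪ D) ∩ (B ∪ {p, q} ∪ D) = {p, q} ∪ D := by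
    rw [Set.union_assoc, Set.union_assoc, ← Set.inter_union_distrib_right,
      h.disjoint.inter_eq, Set.empty_union]
  rw [← hinter] at hear
  refine BalancedOn.of_cover (x := p) (U := fun i : Bool => cond i A B ∪ {p, q} ∪ D)
    (fun i => by simp) ?_ (Bool.forall_bool.2 ⟨hB, hA⟩) ?_
  · rintro (_ | _) (_ | _) hij
    exacts [absurd rfl hij, Set.inter_comm _ _ ▸ hear, hear, absurd rfl hij]
  · intro a ha b hb hab
    rw [h.eq_union] at ha hb
    have hAB : a ∈ A → b ∉ B := fun ha hb => h.not_touch ⟨a, ha, b, hb, hab⟩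
    have hBA : a ∈ B → b ∉ A := fun ha hb => h.not_touch ⟨b, hb, a, ha, hab.symm⟩
    simp only [Set.mem_union, Bool.exists_bool, cond] at ha hb ⊢
    tauto

/-- The sum of the edge labelling `φ` along a walk. -/
def walkSum (φ : Sym2 V → ZMod 2) (w : G.Walk u v) : ZMod 2 :=
  (w.edges.map φ).sum

theorem walkSum_append {w : G.Walk u v} {w' : G.Walk v x} :
    walkSum φ (w.append w') = walkSum φ w + walkSum φ w' := by
  simp [walkSum]

theorem walkSum_reverse {w : G.Walk u v} : walkSum φ w.reverse = walkSum φ w := by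
  simp [walkSum]

theorem IsPotentialOn.walkSum_eq (hs : IsPotentialOn G φ s C) (w : G.Walk u v)
    (hw : ∀ x ∈ w.support, x ∈ C) : walkSum φ w = s u + s v := by
  induction w with
  | nil => exact (CharTwo.add_self_eq_zero _).symm
  | @cons u v' v hadj w ih =>
    have hv' : v' ∈ C := hw v' (by simp)
    have ih := ih fun x hx => hw x (by simp [hx])
    simp only [walkSum, Walk.edges_cons, List.map_cons, List.sum_cons] at ih ⊢
    rw [ih, hs (hw u (by simp)) hv' hadj]
    linear_combination CharTwo.add_self_eq_zero (s v')

theorem balancedOn_univ_of_walkSum_eq_zero (h : ∀ (u : V) (w : G.Walk u u), walkSum φ w = 0) :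
    BalancedOn G φ Set.univ := by
  have hreach (x : V) : Nonempty (G.Walk (G.connectedComponentMk x).out x) :=
    ConnectedComponent.exact (Quot.out_eq _)
  let w (x : V) := (hreach x).some
  refine ⟨fun x => walkSum φ (w x), fun a _ b _ hab => ?_⟩
  have hout : (G.connectedComponentMk b).out = (G.connectedComponentMk a).out := by
    rw [ConnectedComponent.connectedComponentMk_eq_of_adj hab]
  have hsum := h _ ((w a).append (.cons hab ((w b).copy hout rfl).reverse))
  simp only [walkSum, Walk.edges_append, Walk.edges_cons, Walk.edges_reverse, Walk.edges_copy,
    List.map_append, List.map_cons, List.sum_append, List.sum_cons, List.map_reverse,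
    List.sum_reverse] at hsum ⊢
  rw [← add_assoc, add_right_comm] at hsum
  exact (CharTwo.add_eq_zero.1 hsum).symm

theorem exists_eq_append_append (w : G.Walk u v) (hij : i ≤ j) (hj : j ≤ w.length) :
    ∃ (x y : V) (w₁ : G.Walk u x) (w₂ : G.Walk x y) (w₃ : G.Walk y v),
      w = w₁.append (w₂.append w₃) ∧ x = w.getVert i ∧ y = w.getVert j ∧
      w₁.length = i ∧ w₂.length = j - i ∧ w₃.length = w.length - j := by
  refine ⟨_, _, w.take i, (w.drop i).take (j - i), (w.drop i).drop (j - i), ?_, rfl, ?_, ?_, ?_, ?_⟩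
  · rw [Walk.append_take_drop_eq, Walk.append_take_drop_eq]
  · rw [Walk.drop_getVert, Nat.add_sub_cancel' hij]
  · rw [Walk.take_length]; omega
  · rw [Walk.take_length, Walk.drop_length]; omega
  · rw [Walk.drop_length, Walk.drop_length]; omega

/-- A closed walk of minimum length among those with nonzero sum: the candidate for an unbalanced
induced cycle. -/
structure IsShortestUnbalanced (φ : Sym2 V → ZMod 2) (w : G.Walk u u) : Prop where
  walkSum_ne_zero : walkSum φ w ≠ 0
  length_le : ∀ (x : V) (w' : G.Walk x x), walkSum φ w' ≠ 0 → w.length ≤ w'.length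

theorem exists_isShortestUnbalanced (h : ¬ BalancedOn G φ Set.univ) :
    ∃ (u : V) (w : G.Walk u u), IsShortestUnbalanced φ w := by
  have hex : ∃ n u, ∃ w : G.Walk u u, walkSum φ w ≠ 0 ∧ w.length = n := by
    by_contra! hall
    exact h (balancedOn_univ_of_walkSum_eq_zero fun u w => by_contra fun hw => hall _ u w hw rfl)
  classical
  obtain ⟨u, w, hw, hn⟩ := Nat.find_spec hex
  exact ⟨u, w, hw, fun x w' hw' => hn ▸ Nat.find_min' hex ⟨x, w', hw', rfl⟩⟩

namespace IsShortestUnbalanced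

variable {w : G.Walk u u}

theorem length_le_of_walk (hw : IsShortestUnbalanced φ w) (hij : i ≤ j) (hj : j ≤ w.length)
    (r : G.Walk (w.getVert i) (w.getVert j)) :
    w.length ≤ j - i + r.length ∨ j ≤ i + r.length := by
  obtain ⟨x, y, w₁, w₂, w₃, hsplit, hx, hy, h₁, h₂, h₃⟩ := exists_eq_append_append w hij hj
  have hsum : walkSum φ (w₂.append (r.copy hx.symm hy.symm).reverse) +
      walkSum φ (w₁.append ((r.copy hx.symm hy.symm).append w₃)) = walkSum φ w := by
    conv_rhs => rw [hsplit]
    simp only [walkSum_append, walkSum_reverse]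
    linear_combination CharTwo.add_self_eq_zero (walkSum φ (r.copy hx.symm hy.symm))
  by_cases h₀ : walkSum φ (w₂.append (r.copy hx.symm hy.symm).reverse) = 0
  · rw [h₀, zero_add] at hsum
    have := hw.length_le _ (w₁.append ((r.copy hx.symm hy.symm).append w₃))
      (hsum ▸ hw.walkSum_ne_zero)
    simp only [Walk.length_append, Walk.length_copy] at this
    omega
  · have := hw.length_le _ _ h₀
    simp only [Walk.length_append, Walk.length_reverse, Walk.length_copy] at this
    omega

theorem three_le_length (hw : IsShortestUnbalanced φ w) : 3 ≤ w.length := by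
  have hne := hw.walkSum_ne_zero
  match w with
  | .nil => simp [walkSum] at hne
  | .cons h .nil => exact (G.irrefl h).elim
  | .cons h (.cons h' .nil) => simp [walkSum, Sym2.eq_swap, CharTwo.add_self_eq_zero] at hne
  | .cons _ (.cons _ (.cons _ _)) => simp

theorem isCycleEnum (hw : IsShortestUnbalanced φ w) :
    IsCycleEnum G w.length fun i => w.getVert (i % w.length) := by
  refine .of_lt hw.three_le_length (fun i j hij hj heq => ?_) fun i j hij hj => ⟨fun hadj => ?_, ?_⟩
  · have := hw.length_le_of_walk hij.le hj.le (Walk.nil.copy rfl heq)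
    simp only [Walk.length_copy, Walk.length_nil] at this
    omega
  · have := hw.length_le_of_walk hij.le hj.le hadj.toWalk
    simp only [Adj.toWalk, Walk.length_cons, Walk.length_nil] at this
    omega
  · rintro (rfl | hj')
    · exact w.adj_getVert_succ (by omega)
    · obtain rfl : i = 0 := by omega
      have := w.adj_getVert_succ hj
      rw [show j + 1 = w.length by omega, w.getVert_length] at this
      rw [w.getVert_zero]
      exact this.symm

theorem not_balancedOn (hw : IsShortestUnbalanced φ w) :
    ¬ BalancedOn G φ (Set.range fun i => w.getVert (i % w.length)) := by
  rintro ⟨s, hs⟩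
  refine hw.walkSum_ne_zero ((hs.walkSum_eq w fun x hx => ?_).trans (CharTwo.add_self_eq_zero _))
  obtain ⟨i, rfl, hi⟩ := Walk.mem_support_iff_exists_getVert.1 hx
  rcases hi.eq_or_lt with rfl | hi
  · exact ⟨0, by simp⟩
  · exact ⟨i, by simp only [Nat.mod_eq_of_lt hi]⟩

end IsShortestUnbalanced

theorem exists_isInducedCycle_not_balancedOn (h : ¬ BalancedOn G φ C) :
    ∃ S ⊆ C, IsInducedCycle G S ∧ ¬ BalancedOn G φ S := by
  have h' : ¬ BalancedOn (G.induce C) (φ ∘ Sym2.map Subtype.val) Set.univ := by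
    rintro ⟨s, hs⟩
    classical
    refine h ⟨fun x => if hx : x ∈ C then s ⟨x, hx⟩ else 0, fun a ha b hb hab => ?_⟩
    have hab' : (G.induce C).Adj ⟨a, ha⟩ ⟨b, hb⟩ := hab
    simpa [ha, hb] using hs (Set.mem_univ _) (Set.mem_univ _) hab'
  obtain ⟨u, w, hw⟩ := exists_isShortestUnbalanced h'
  refine ⟨_, ?_, ⟨_, _, hw.isCycleEnum.map (Embedding.induce C), rfl⟩, ?_⟩
  · rintro _ ⟨i, rfl⟩
    exact Subtype.coe_prop _
  · rintro ⟨s, hs⟩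
    refine hw.not_balancedOn ⟨s ∘ Subtype.val, ?_⟩
    rintro _ ⟨i, rfl⟩ _ ⟨j, rfl⟩ hab
    exact hs ⟨i, rfl⟩ ⟨j, rfl⟩ hab

theorem IsCycleEnum.balancedOn (hc : IsCycleEnum G n c)
    (h : ∑ i ∈ Finset.range n, φ s(c i, c (i + 1)) = 0) : BalancedOn G φ (Set.range c) := by
  let t : ℕ → ZMod 2 := fun i => ∑ k ∈ Finset.range i, φ s(c k, c (k + 1))
  let s : V → ZMod 2 := fun x => t (Function.invFunOn c (Set.Ico 0 n) x)
  have hs : ∀ i, i < n → s (c i) = t i := fun i hi =>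
    congrArg t (hc.injOn.leftInvOn_invFunOn ⟨i.zero_le, hi⟩)
  have hstep : ∀ i, i + 1 ≤ n → φ s(c i, c (i + 1)) = t i + t (i + 1) := by
    intro i _
    simp only [t, Finset.sum_range_succ, ← add_assoc, CharTwo.add_self_eq_zero, zero_add]
  have key : ∀ i j, i < j → j < n → G.Adj (c i) (c j) →
      φ s(c i, c j) = s (c i) + s (c j) := by
    intro i j hij hj hadj
    rw [hs i (by omega), hs j hj]
    rcases (hc.adj_iff hij (by omega)).1 hadj with rfl | hjn
    · exact hstep i hj.le
    · obtain rfl : i = 0 := by omega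
      have := hstep j hj
      rw [show j + 1 = 0 + n by omega, hc.periodic 0, zero_add, show t n = t 0 from h] at this
      rw [Sym2.eq_swap, this, add_comm]
  refine ⟨s, fun a ha b hb hab => ?_⟩
  obtain ⟨i, -, hi, rfl⟩ := hc.exists_eq ha 0
  obtain ⟨j, -, hj, rfl⟩ := hc.exists_eq hb 0
  rcases lt_trichotomy i j with hij | rfl | hij
  · exact key i j hij (by omega) hab
  · exact (G.irrefl hab).elim
  · rw [Sym2.eq_swap, add_comm]
    exact key j i hij (by omega) hab.symm

end Balance

/-! ### Tutte's theorem on peripheral cycles -/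

section Tutte

variable {G : SimpleGraph V} {φ : Sym2 V → ZMod 2} {A B C D T U : Set V} {p q x : V}

theorem connected_union_of_subset_outerBoundary (hD : (G.induce D).Connected)
    (hT : T ⊆ outerBoundary G D) : (G.induce (D ∪ T)).Connected := by
  obtain ⟨K, hK, hDK⟩ := exists_isComponentIn hD Set.subset_union_left
  have hTK : T ⊆ K := fun x hx =>
    let ⟨_, d, hd, hdx⟩ := hT hx
    hK.mem_of_adj (hDK hd) (.inr hx) hdx
  rw [(Set.union_subset hDK hTK).antisymm hK.subset]
  exact hK.connected

theorem ArcSplit.balancedOn_of_touch (h : ArcSplit G C p q A B) (hC : IsInducedCycle G C)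
    (hD : (G.induce D).Connected) (hDA : Touch G D A) (hDB : Touch G D B) (hp : p ∉ D) (hq : q ∉ D)
    (hφ : ∀ U ⊆ C ∪ D, p ∉ U ∨ q ∉ U → BalancedOn G φ U) : BalancedOn G φ C := by
  obtain ⟨c, hc, a, ha, hca⟩ := hDA
  obtain ⟨d, hd, b, hb, hdb⟩ := hDB
  have hpab : p ∉ ({a, b} : Set V) := by
    rintro (rfl | rfl)
    exacts [h.left.left_notMem ha, h.right.left_notMem hb]
  have hqab : q ∉ ({a, b} : Set V) := by
    rintro (rfl | rfl)
    exacts [h.left.right_notMem ha, h.right.right_notMem hb]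
  have hbal {A' B' : Set V} (h' : ArcSplit G C a b A' B') :
      BalancedOn G φ (A' ∪ {a, b} ∪ D) := by
    refine hφ _ ?_ ((h.mem_or_mem ha hb h'.right h'.right_subset).imp (fun hpB => ?_) fun hqB => ?_)
    · exact Set.union_subset_union_left D (Set.union_subset h'.left_subset
        (Set.pair_subset h'.left_mem h'.right_mem))
    · simp only [Set.mem_union, h'.disjoint.notMem_of_mem_right hpB, hpab, hp, or_false,
        not_false_eq_true]
    · simp only [Set.mem_union, h'.disjoint.notMem_of_mem_right hqB, hqab, hq, or_false,
        not_false_eq_true]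
  obtain ⟨A', B', h'⟩ := hC.exists_arcSplit (h.left_subset ha) (h.right_subset hb)
    (h.disjoint.ne_of_mem ha hb) fun hab => h.not_touch ⟨a, ha, b, hb, hab⟩
  exact h'.balancedOn_of_ear hD ⟨a, rfl, c, hc, hca.symm⟩ ⟨b, rfl, d, hd, hdb.symm⟩ (hbal h')
    (hbal h'.symm)

theorem ArcSplit.balancedOn_of_mem_outerBoundary (h : ArcSplit G C p q A B)
    (hD : (G.induce D).Connected) (hCD : Disjoint C D) (hp : p ∈ outerBoundary G D)
    (hq : q ∈ outerBoundary G D) (hφ : ∀ U ⊆ C ∪ D, ∀ x ∈ C, x ∉ U → BalancedOn G φ U) :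
    BalancedOn G φ C := by
  obtain ⟨-, c, hc, hcp⟩ := hp
  obtain ⟨-, d, hd, hdq⟩ := hq
  have hbal {A' B' : Set V} (h' : ArcSplit G C p q A' B') :
      BalancedOn G φ (A' ∪ {p, q} ∪ D) := by
    obtain ⟨x, hx⟩ := nonempty_of_connected_induce h'.right.connected
    have hxC := h'.right_subset hx
    refine hφ _ (Set.union_subset_union_left D (Set.union_subset h'.left_subset
      (Set.pair_subset h'.left_mem h'.right_mem))) x hxC ?_
    rintro ((hxA | hxpq) | hxD)
    exacts [h'.disjoint.notMem_of_mem_left hxA hx, h'.right.subset_compl_pair hx hxpq,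
      hCD.notMem_of_mem_left hxC hxD]
  exact h.balancedOn_of_ear hD ⟨p, rfl, c, hc, hcp.symm⟩ ⟨q, rfl, d, hd, hdq.symm⟩ (hbal h)
    (hbal h.symm)

theorem IsInducedCycle.balancedOn_of_subset_outerBoundary (hC : IsInducedCycle G C)
    (hD : (G.induce D).Connected) (hCD : C ⊆ outerBoundary G D)
    (hφ : ∀ U ⊆ C ∪ D, ∀ x ∈ C, x ∉ U → BalancedOn G φ U) : BalancedOn G φ C := by
  obtain ⟨d, hd⟩ := nonempty_of_connected_induce hD
  refine BalancedOn.of_cover (x := d) (U := fun x : C => D ∪ (C \ {↑x})) (fun _ => .inl hd)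
    (fun x y _ => ?_) (fun x => hφ _ ?_ x x.2 ?_) fun a ha b hb hab => ?_
  · change (G.induce ((D ∪ _) ∩ (D ∪ _))).Connected
    rw [← Set.union_inter_distrib_left]
    exact connected_union_of_subset_outerBoundary hD
      ((Set.inter_subset_left.trans Set.sdiff_subset).trans hCD)
  · exact Set.union_comm C D ▸ Set.union_subset_union_right D Set.sdiff_subset
  · simp [(hCD x.2).1]
  · obtain ⟨x, hx, hxab⟩ : ∃ x ∈ C, x ∉ ({a, b} : Set V) :=
      Set.exists_mem_notMem_of_ncard_lt_ncard
        (by rw [Set.ncard_pair hab.ne]; exact hC.three_le_ncard)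
    rw [Set.mem_insert_iff, Set.mem_singleton_iff, not_or] at hxab
    exact ⟨⟨x, hx⟩, .inr ⟨ha, Ne.symm hxab.1⟩, .inr ⟨hb, Ne.symm hxab.2⟩⟩

/-- `B` is a maximal connected set of vertices whose complement is unbalanced: the largest bridge
avoiding an unbalanced cycle in Tutte's argument. -/
def IsMaximalBridge (G : SimpleGraph V) (φ : Sym2 V → ZMod 2) (B : Set V) : Prop :=
  Maximal (fun B => (G.induce B).Connected ∧ ¬ BalancedOn G φ Bᶜ) B

namespace IsMaximalBridge

theorem balancedOn_of_notMem (hB : IsMaximalBridge G φ B) (hU : U ⊆ Bᶜ)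
    (hx : x ∈ outerBoundary G B) (hxU : x ∉ U) : BalancedOn G φ U := by
  by_contra h
  obtain ⟨hxB, b, hb, hbx⟩ := hx
  refine hxB (hB.le_of_ge ⟨connected_induce_insert hB.prop.1 hb hbx, fun hbal => h ?_⟩
    (Set.subset_insert x B) (Set.mem_insert x B))
  exact hbal.mono fun y hy => by
    rintro (rfl | hyB)
    exacts [hxU hy, hU hy hyB]

theorem subset_outerBoundary (hB : IsMaximalBridge G φ B) (h3 : IsKConnected 3 G)
    (hC : IsInducedCycle G C) (hCB : C ⊆ Bᶜ) (hφ : ¬ BalancedOn G φ C) :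
    C ⊆ outerBoundary G B := by
  have hXC : outerBoundary G B ⊆ C := fun x hx =>
    by_contra fun hxC => hφ (hB.balancedOn_of_notMem hCB hx hxC)
  by_contra hCX
  obtain ⟨y, hyC, hyX⟩ := Set.not_subset.1 hCX
  have hX := h3.le_ncard_outerBoundary (nonempty_of_connected_induce hB.prop.1) (hCB hyC) hyX
  obtain ⟨p, hp, q, hq, Q, M, h, hQX⟩ :=
    hC.exists_arcSplit_disjoint hCX (by rwa [Set.inter_eq_right.2 hXC])
  have hpq : (G.induce ({p, q} : Set V)ᶜ).Connected :=
    h3.connected_compl (by rw [Set.ncard_pair h.ne]; norm_num)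
  have hBpq : B ⊆ ({p, q} : Set V)ᶜ := by
    rintro y hy (rfl | rfl)
    exacts [hp.1 hy, hq.1 hy]
  obtain ⟨a, ha, b, hb | hb, hab⟩ | ⟨D, hD, hDQ, a, ha, b, hb | hb, hab⟩ :=
    touch_or_exists_isComponentIn hpq h.left.subset_compl_pair
    (Set.union_subset h.right.subset_compl_pair hBpq)
    (nonempty_of_connected_induce h.left.connected)
    ((nonempty_of_connected_induce h.right.connected).mono Set.subset_union_left)
    (h.disjoint.union_right (Set.disjoint_of_subset_left h.left_subset (Set.disjoint_left.2 hCB)))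
  · exact h.not_touch ⟨a, ha, b, hb, hab⟩
  · exact hQX.notMem_of_mem_left ha ⟨hCB (h.left_subset ha), b, hb, hab.symm⟩
  · have hDB : D ⊆ Bᶜ := fun y hy hyB => (hD.subset hy).2 (.inr (.inr hyB))
    refine hφ (h.balancedOn_of_touch hC hD.connected hDQ ⟨a, ha, b, hb, hab⟩
      (fun hpD => (hD.subset hpD).1 (.inl rfl)) (fun hqD => (hD.subset hqD).1 (.inr rfl))
      fun U hU hpqU => ?_)
    have hUB := hU.trans (Set.union_subset hCB hDB)
    exact hpqU.elim (hB.balancedOn_of_notMem hUB hp) (hB.balancedOn_of_notMem hUB hq)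
  · have haC : a ∈ C := hXC ⟨fun haB => (hD.subset ha).2 (.inr (.inr haB)), b, hb, hab.symm⟩
    obtain ⟨hapq, haQMB⟩ := hD.subset ha
    rw [h.eq_union] at haC
    simp only [Set.mem_union, not_or] at haC haQMB
    tauto

theorem outerBoundary_subset (hB : IsMaximalBridge G φ B) (hCB : C ⊆ Bᶜ)
    (hφ : ¬ BalancedOn G φ C) (hD : IsComponentIn G (Bᶜ \ C) D) : outerBoundary G D ⊆ C := by
  rintro x ⟨hxD, d, hd, hdx⟩
  by_contra hxC
  obtain ⟨hdB, hdC⟩ := hD.subset hd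
  have hxB : x ∈ B := by_contra fun hxB => hxD (hD.mem_of_adj hd ⟨hxB, hxC⟩ hdx)
  exact hφ (hB.balancedOn_of_notMem hCB ⟨hdB, x, hxB, hdx.symm⟩ hdC)

theorem compl_subset (hB : IsMaximalBridge G φ B) (h3 : IsKConnected 3 G)
    (hC : IsInducedCycle G C) (hCB : C ⊆ Bᶜ) (hφ : ¬ BalancedOn G φ C) : Bᶜ ⊆ C := by
  by_contra hBC
  obtain ⟨y, hyB, hyC⟩ := Set.not_subset.1 hBC
  obtain ⟨D, hD, -⟩ := exists_isComponentIn_of_mem (G := G) (R := Bᶜ \ C) ⟨hyB, hyC⟩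
  have hDC := hB.outerBoundary_subset hCB hφ hD
  have hCD : Disjoint C D := Set.disjoint_left.2 fun x hx hxD => (hD.subset hxD).2 hx
  have hbal : ∀ U ⊆ C ∪ D, ∀ x ∈ C, x ∉ U → BalancedOn G φ U := fun U hU x hx =>
    hB.balancedOn_of_notMem
      (hU.trans (Set.union_subset hCB (hD.subset.trans Set.sdiff_subset)))
      (hB.subset_outerBoundary h3 hC hCB hφ hx)
  by_cases hCA : C ⊆ outerBoundary G D
  · exact hφ (hC.balancedOn_of_subset_outerBoundary hD.connected hCA hbal)
  · obtain ⟨b, hb⟩ := nonempty_of_connected_induce hB.prop.1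
    have h3A := h3.le_ncard_outerBoundary hD.nonempty (fun hbD => (hD.subset hbD).1 hb)
      fun hbA => hCB (hDC hbA) hb
    obtain ⟨p, hp, q, hq, _, _, h, -⟩ :=
      hC.exists_arcSplit_disjoint hCA (by rwa [Set.inter_eq_right.2 hDC])
    exact hφ (h.balancedOn_of_mem_outerBoundary hD.connected hCD hp hq hbal)

end IsMaximalBridge

theorem balancedOn_univ_of_isPeripheral (h3 : IsKConnected 3 G)
    (h : ∀ S, IsPeripheral G S → BalancedOn G φ S) : BalancedOn G φ Set.univ := by
  have := h3.finite
  by_contra hφ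
  obtain ⟨S, -, hS, hSφ⟩ := exists_isInducedCycle_not_balancedOn hφ
  obtain ⟨x, hx⟩ : ∃ x, x ∉ S := by
    by_contra! huniv
    obtain ⟨x, hx⟩ := nonempty_of_connected_induce hS.connected
    have hdeg := h3.le_ncard_neighborSet x
    rw [← Set.inter_univ (G.neighborSet x), ← Set.eq_univ_of_forall huniv,
      hS.ncard_neighborSet_inter hx] at hdeg
    omega
  have hxφ : ¬ BalancedOn G φ {x}ᶜ := fun hbal => hSφ <| hbal.mono <| by
    rintro y hy rfl
    exact hx hy
  obtain ⟨B, -, hB : IsMaximalBridge G φ B⟩ :=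
    (Set.toFinite {B : Set V | (G.induce B).Connected ∧ ¬ BalancedOn G φ Bᶜ}).exists_le_maximal
      ⟨connected_induce_singleton x, hxφ⟩
  obtain ⟨C, hCB, hC, hCφ⟩ := exists_isInducedCycle_not_balancedOn hB.prop.2
  obtain rfl := hCB.antisymm (hB.compl_subset h3 hC hCB hCφ)
  exact hCφ (h _ ⟨hC, by rw [compl_compl]; exact hB.prop.1⟩)

end Tutte

/-! ### Counting edges, vertices and peripheral cycles -/

section Counting

variable {G : SimpleGraph V} {F : Set (Set V)} {S S' : Set V} {x y : V} {k : ℕ}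

/-- The coboundary of a vertex labelling: the edge labelling which sums the labels of the ends. -/
def coboundary (G : SimpleGraph V) : (V → ZMod 2) →ₗ[ZMod 2] (G.edgeSet → ZMod 2) where
  toFun s e := Sym2.lift ⟨fun a b => s a + s b, fun _ _ => add_comm _ _⟩ (e : Sym2 V)
  map_add' s t := by
    ext ⟨⟨a, b⟩, _⟩
    exact add_add_add_comm _ _ _ _
  map_smul' r s := by
    ext ⟨⟨a, b⟩, _⟩
    exact (mul_add r (s a) (s b)).symm

theorem ncard_edgeSet_le_of_balancedOn [Finite V] (hF : ∀ S ∈ F, IsInducedCycle G S)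
    (h : ∀ φ, (∀ S ∈ F, BalancedOn G φ S) → BalancedOn G φ Set.univ) :
    G.edgeSet.ncard ≤ F.ncard + Nat.card V := by
  classical
  have := Fintype.ofFinite V
  have := Fintype.ofFinite F
  choose n c hc hrange using hF
  let ext := Function.ExtendByZero.linearMap (ZMod 2) ((↑) : G.edgeSet → Sym2 V)
  let Φ : (G.edgeSet → ZMod 2) →ₗ[ZMod 2] (F → ZMod 2) := LinearMap.pi fun S =>
    ∑ i ∈ Finset.range (n S S.2), LinearMap.proj s(c S S.2 i, c S S.2 (i + 1)) ∘ₗ ext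
  have hker : Φ.ker ≤ (coboundary G).range := by
    intro f hf
    obtain ⟨s, hs⟩ := h (ext f) fun S hS => hrange S hS ▸ (hc S hS).balancedOn (by
      simpa [Φ] using congrFun hf ⟨S, hS⟩)
    refine ⟨s, ?_⟩
    ext ⟨⟨a, b⟩, hab⟩
    exact (hs (Set.mem_univ a) (Set.mem_univ b) hab).symm.trans
      (Subtype.val_injective.extend_apply f 0 ⟨s(a, b), hab⟩)
  have hrank := Φ.finrank_range_add_finrank_ker
  have hΦ := Φ.range.finrank_le
  have hδ := (Submodule.finrank_mono hker).trans (coboundary G).finrank_range_le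
  simp only [Module.finrank_fintype_fun_eq_card] at hrank hΦ hδ
  rw [← Nat.card_coe_set_eq, ← Nat.card_coe_set_eq, Nat.card_eq_fintype_card,
    Nat.card_eq_fintype_card, Nat.card_eq_fintype_card]
  omega

theorem two_mul_ncard_edgeSet [Fintype V] :
    2 * G.edgeSet.ncard = ∑ x, (G.neighborSet x).ncard := by
  classical
  rw [Set.ncard_eq_toFinset_card', ← edgeFinset, ← G.sum_degrees_eq_twice_card_edges]
  exact Finset.sum_congr rfl fun x _ => (Set.ncard_eq_toFinset_card' _).symm

theorem sum_ncard_le_mul_ncard_edgeSet [Finite V] {F : Finset (Set V)}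
    (hF : ∀ S ∈ F, IsInducedCycle G S)
    (hk : ∀ x y, G.Adj x y → {S | S ∈ F ∧ x ∈ S ∧ y ∈ S}.ncard ≤ k) :
    ∑ S ∈ F, S.ncard ≤ k * G.edgeSet.ncard := by
  classical
  have := Fintype.ofFinite V
  have hcycle : ∀ S ∈ F, 2 * S.ncard =
      ∑ x, ∑ y ∈ G.neighborFinset x, if x ∈ S ∧ y ∈ S then 1 else 0 := by
    intro S hS
    have hx : ∀ x, (∑ y ∈ G.neighborFinset x, if x ∈ S ∧ y ∈ S then 1 else 0) =
        if x ∈ S then 2 else 0 := by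
      intro x
      split_ifs with hx
      · rw [← (hF S hS).ncard_neighborSet_inter hx, ← Finset.card_filter, ← Set.ncard_coe_finset,
          Finset.coe_filter]
        simp only [hx, true_and, mem_neighborFinset]
        rfl
      · simp [hx]
    rw [Finset.sum_congr rfl fun x _ => hx x, ← Finset.sum_filter, Finset.sum_const, smul_eq_mul,
      ← Set.ncard_coe_finset, Finset.coe_filter_univ, mul_comm]
    rfl
  have hedge : ∀ x, ∀ y ∈ G.neighborFinset x,
      ∑ S ∈ F, (if x ∈ S ∧ y ∈ S then 1 else 0) ≤ k := by
    intro x y hy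
    rw [← Finset.card_filter, ← Set.ncard_coe_finset, Finset.coe_filter]
    exact hk x y ((G.mem_neighborFinset x y).1 hy)
  suffices 2 * ∑ S ∈ F, S.ncard ≤ k * (2 * G.edgeSet.ncard) by linarith
  calc 2 * ∑ S ∈ F, S.ncard
    _ = ∑ x, ∑ y ∈ G.neighborFinset x, ∑ S ∈ F, if x ∈ S ∧ y ∈ S then 1 else 0 := by
      rw [Finset.mul_sum, Finset.sum_congr rfl hcycle, Finset.sum_comm]
      exact Finset.sum_congr rfl fun x _ => Finset.sum_comm
    _ ≤ ∑ x, k * (G.neighborSet x).ncard := Finset.sum_le_sum fun x _ => by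
      rw [Set.ncard_eq_toFinset_card', mul_comm]
      exact Finset.sum_le_card_nsmul _ _ _ (hedge x)
    _ = k * (2 * G.edgeSet.ncard) := by rw [two_mul_ncard_edgeSet, Finset.mul_sum]

theorem eq_of_ncard_eq_three (hk4 : ¬ containsK4minus G) (hS : IsInducedCycle G S)
    (hS' : IsInducedCycle G S') (h : S.ncard = 3) (h' : S'.ncard = 3) (hxy : G.Adj x y)
    (hx : x ∈ S ∩ S') (hy : y ∈ S ∩ S') : S = S' := by
  by_contra hne
  obtain ⟨z, hz, hzS'⟩ := Set.not_subset.1 fun hsub => hne (hS.eq_of_subset hS' hsub)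
  obtain ⟨w, hw, hwxy⟩ : ∃ w ∈ S', w ∉ ({x, y} : Set V) :=
    Set.exists_mem_notMem_of_ncard_lt_ncard (by rw [Set.ncard_pair hxy.ne, h']; norm_num)
  rw [Set.mem_insert_iff, Set.mem_singleton_iff, not_or] at hwxy
  have hzx : x ≠ z := by rintro rfl; exact hzS' hx.2
  have hzy : y ≠ z := by rintro rfl; exact hzS' hy.2
  have hzw : z ≠ w := by rintro rfl; exact hzS' hw
  exact hk4 ⟨x, y, z, w, hxy.ne, hzx, Ne.symm hwxy.1, hzy, Ne.symm hwxy.2, hzw, hxy,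
    hS.adj_of_ncard_eq_three h hx.1 hz hzx, hS'.adj_of_ncard_eq_three h' hx.2 hw (Ne.symm hwxy.1),
    hS.adj_of_ncard_eq_three h hy.1 hz hzy, hS'.adj_of_ncard_eq_three h' hy.2 hw (Ne.symm hwxy.2)⟩

/-- The triangles of `G`, as vertex sets. -/
def triangles (G : SimpleGraph V) : Set (Set V) :=
  {S | IsInducedCycle G S ∧ S.ncard = 3}

theorem three_mul_ncard_triangles_le [Finite V] (hk4 : ¬ containsK4minus G) :
    3 * (triangles G).ncard ≤ G.edgeSet.ncard := by
  have hfin := Set.toFinite (triangles G)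
  have hT {S : Set V} : S ∈ hfin.toFinset ↔ IsInducedCycle G S ∧ S.ncard = 3 := hfin.mem_toFinset
  calc 3 * (triangles G).ncard
    _ = ∑ S ∈ hfin.toFinset, S.ncard := by
      rw [Finset.sum_const_nat fun S hS => (hT.1 hS).2, mul_comm, Set.ncard_eq_toFinset_card]
    _ ≤ 1 * G.edgeSet.ncard := by
      refine sum_ncard_le_mul_ncard_edgeSet (fun S hS => (hT.1 hS).1) fun x y hxy =>
        (Set.ncard_le_one (Set.toFinite _)).2 ?_
      rintro S ⟨hS, hx, hy⟩ S' ⟨hS', hx', hy'⟩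
      rw [hT] at hS hS'
      exact eq_of_ncard_eq_three hk4 hS.1 hS'.1 hS.2 hS'.2 hxy ⟨hx, hx'⟩ ⟨hy, hy'⟩
    _ = G.edgeSet.ncard := one_mul _

theorem IsPlanar.four_mul_ncard_isPeripheral_le [Finite V] (hG : IsPlanar G)
    (hdeg : ∀ x, 3 ≤ (G.neighborSet x).ncard) :
    4 * {S | IsPeripheral G S}.ncard ≤ 2 * G.edgeSet.ncard + (triangles G).ncard := by
  have hfin := Set.toFinite {S | IsPeripheral G S}
  have hP {S : Set V} : S ∈ hfin.toFinset ↔ IsPeripheral G S := hfin.mem_toFinset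
  have hcycle : ∀ S ∈ hfin.toFinset, IsInducedCycle G S := fun S hS => (hP.1 hS).isInducedCycle
  have htriangles : (hfin.toFinset.filter fun S => S.ncard = 3).card ≤ (triangles G).ncard := by
    rw [← Set.ncard_coe_finset, Finset.coe_filter]
    exact Set.ncard_le_ncard fun S hS => ⟨hcycle S hS.1, hS.2⟩
  calc 4 * {S | IsPeripheral G S}.ncard
    _ = hfin.toFinset.card • 4 := by rw [Set.ncard_eq_toFinset_card, mul_comm, smul_eq_mul]
    _ ≤ ∑ S ∈ hfin.toFinset, (S.ncard + if S.ncard = 3 then 1 else 0) := by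
      refine Finset.card_nsmul_le_sum _ _ _ fun S hS => ?_
      have := (hcycle S hS).three_le_ncard
      split_ifs <;> omega
    _ ≤ 2 * G.edgeSet.ncard + (triangles G).ncard := by
      rw [Finset.sum_add_distrib, ← Finset.card_filter]
      refine add_le_add (sum_ncard_le_mul_ncard_edgeSet hcycle fun x y hxy => ?_) htriangles
      simpa only [hP] using hG.ncard_isPeripheral_le_two hdeg hxy

theorem IsPlanar.exists_ncard_neighborSet_le_four (hG : IsPlanar G) (h3 : IsKConnected 3 G)
    (hk4 : ¬ containsK4minus G) : ∃ u, (G.neighborSet u).ncard ≤ 4 := by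
  have := h3.finite
  have := Fintype.ofFinite V
  by_contra! hdeg
  have hdegrees : 5 * Nat.card V ≤ 2 * G.edgeSet.ncard := by
    rw [two_mul_ncard_edgeSet, mul_comm, Nat.card_eq_fintype_card]
    exact Finset.card_nsmul_le_sum _ _ _ fun x _ => Nat.succ_le_of_lt (hdeg x)
  have hrank : G.edgeSet.ncard ≤ {S | IsPeripheral G S}.ncard + Nat.card V :=
    ncard_edgeSet_le_of_balancedOn (fun S hS => hS.isInducedCycle)
      fun φ => balancedOn_univ_of_isPeripheral h3
  have hfaces := hG.four_mul_ncard_isPeripheral_le h3.le_ncard_neighborSet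
  have htriangles := three_mul_ncard_triangles_le hk4
  have hcard := h3.1
  rw [Set.ncard_univ] at hcard
  omega

end Counting

/-! ### Deleting the apex -/

section InduceCompl

variable {G : SimpleGraph V} {s : Set V}

theorem containsK4minus.of_induce (h : containsK4minus (G.induce s)) : containsK4minus G := by
  obtain ⟨a, b, c, d, hab, hac, had, hbc, hbd, hcd, hadj⟩ := h
  exact ⟨a, b, c, d, Subtype.coe_ne_coe.2 hab, Subtype.coe_ne_coe.2 hac, Subtype.coe_ne_coe.2 had,
    Subtype.coe_ne_coe.2 hbc, Subtype.coe_ne_coe.2 hbd, Subtype.coe_ne_coe.2 hcd, hadj⟩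

theorem ncard_neighborSet_induce_compl_singleton (G : SimpleGraph V) {v : V}
    (u : ({v}ᶜ : Set V)) : ((G.induce ({v}ᶜ : Set V)).neighborSet u).ncard =
      {w | w ≠ v ∧ G.Adj u w}.ncard := by
  rw [← Set.ncard_image_of_injective _ Subtype.val_injective]
  congr 1
  ext w
  exact ⟨fun ⟨x, hx, hxw⟩ => hxw ▸ ⟨x.2, hx⟩, fun ⟨hw, huw⟩ => ⟨⟨w, hw⟩, huw, rfl⟩⟩

theorem ncard_neighborSet_le_succ (G : SimpleGraph V) (v u : V) :
    (G.neighborSet u).ncard ≤ {w | w ≠ v ∧ G.Adj u w}.ncard + 1 := by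
  have h : {w | w ≠ v ∧ G.Adj u w} = G.neighborSet u \ {v} := Set.ext fun _ => and_comm
  rw [h]
  exact Nat.le_add_of_sub_le (Set.pred_ncard_le_ncard_sdiff_singleton _ v)

end InduceCompl

theorem stmt2_general {G : SimpleGraph V} (h4 : IsKConnected 4 G)
    (hdeg : ∀ u, 5 ≤ (G.neighborSet u).ncard) {v : V}
    (hv : IsPlanar (G.induce ({v}ᶜ : Set V))) (hk4 : ¬ containsK4minus G) :
    (∀ u : V, u ≠ v → 4 ≤ {w | w ≠ v ∧ G.Adj u w}.ncard) ∧
    (∃ u : V, u ≠ v ∧ {w | w ≠ v ∧ G.Adj u w}.ncard = 4) := by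
  have hmin : ∀ u, 4 ≤ {w | w ≠ v ∧ G.Adj u w}.ncard := fun u =>
    Nat.le_of_succ_le_succ ((hdeg u).trans (ncard_neighborSet_le_succ G v u))
  obtain ⟨u, hu⟩ := hv.exists_ncard_neighborSet_le_four (h4.induce_compl_singleton v)
    fun h => hk4 h.of_induce
  rw [ncard_neighborSet_induce_compl_singleton] at hu
  exact ⟨fun u _ => hmin u, u, u.2, hu.antisymm (hmin u)⟩

/-- If `G` is 5-connected, nonplanar, with apex vertex `v`, and
`K₄⁻ ⊄ G`, then the planar graph `G - v` has minimum degree exactly 4. -/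
theorem stmt2 {V : Type*} [Fintype V] (G : SimpleGraph V)
    (h5 : IsKConnected 5 G) (hnp : ¬ IsPlanar G) (v : V)
    (hv : IsPlanar (G.induce ({v}ᶜ : Set V))) (hk4 : ¬ containsK4minus G) :
    (∀ u : V, u ≠ v → 4 ≤ {w | w ≠ v ∧ G.Adj u w}.ncard) ∧
    (∃ u : V, u ≠ v ∧ {w | w ≠ v ∧ G.Adj u w}.ncard = 4) :=
  stmt2_general (h5.mono (by norm_num)) h5.le_ncard_neighborSet hv hk4
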